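/- There exists a constant C > 0 such that for every integer R ≥ 4 the following holds: if α ∈ (0,1/2) is irrational and its NICF expansion is eventually periodic with period four, the signed partial quotients (ε_i a_i) eventually cycling through −R, R, −(R+1), R+1, then |ρ(α) − (1/4)(1 − 3/R + 4/R²)| ≤ C/R³ when R is even, and |ρ(α) − (1/4)(1 − 3/R + 5/R²)| ≤ C/R³ when R is odd. -/

import Mathlib

open Filter Finset

attribute [local instance] Classical.propDecidable

/-- Distance from `x` to the nearest integer, `‖x‖`. -/
noncomputable def nint (x : ℝ) : ℝ := |x - round x|

/-- The two-sided inhomogeneous approximation constant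
`M(α,γ) = liminf_{|n|→∞} |n|·‖nα-γ‖`. -/
noncomputable def Mval (α γ : ℝ) : ℝ :=
  Filter.liminf (fun n : ℤ => (|n| : ℝ) * nint (n * α - γ)) Filter.cofinite

/-- `ρ(α) = sup { M(α,γ) : γ ∉ ℤ + αℤ }`. -/
noncomputable def rho (α : ℝ) : ℝ :=
  sSup {m : ℝ | ∃ γ : ℝ, (¬∃ p q : ℤ, γ = (p : ℝ) + (q : ℝ) * α) ∧ m = Mval α γ}

/-- The tails `α_i` of the nearest integer continued fraction expansion of `α`. -/
noncomputable def nicfT (α : ℝ) : ℕ → ℝ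
  | 0 => α
  | i + 1 =>
    if Int.fract (nicfT α i)⁻¹ ≤ 1 / 2 then Int.fract (nicfT α i)⁻¹
    else 1 - Int.fract (nicfT α i)⁻¹

/-- The partial quotients `a_i` (meaningful for `i ≥ 1`) of the NICF expansion. -/
noncomputable def nicfA (α : ℝ) : ℕ → ℤ
  | 0 => 0
  | i + 1 => if Int.fract (nicfT α i)⁻¹ ≤ 1 / 2 then ⌊(nicfT α i)⁻¹⌋ else ⌈(nicfT α i)⁻¹⌉

/-- The signs `ε_i` of the NICF expansion (`ε_1 = 1`). -/
noncomputable def nicfE (α : ℝ) : ℕ → ℤ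
  | 0 => 1
  | 1 => 1
  | i + 2 => if Int.fract (nicfT α i)⁻¹ ≤ 1 / 2 then 1 else -1

/-- `nicfD α n = D_{n-1} = α_0 α_1 ⋯ α_{n-1}` (so `nicfD α 0 = 1`, `nicfD α 1 = α`). -/
noncomputable def nicfD (α : ℝ) (n : ℕ) : ℝ := ∏ j ∈ Finset.range n, nicfT α j

/-- The number of indices `1 ≤ k ≤ i` with `a_k` odd. -/
noncomputable def oddIdx (α : ℝ) (i : ℕ) : ℕ :=
  ((Finset.Icc 1 i).filter fun k => Odd (nicfA α k)).card

/-- `λ_i`: zero if `a_i` is even, `(-1)^j` if `a_i = a_{n_j}` is the `j`-th odd partial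
quotient. -/
noncomputable def lamStar (α : ℝ) (i : ℕ) : ℤ :=
  if Odd (nicfA α i) then (-1) ^ oddIdx α i else 0

/-- `γ_* = Σ_{i≥1} (a_i - 1 + ε_i + λ_i)/2 · D_{i-1}`. -/
noncomputable def gammaStar (α : ℝ) : ℝ :=
  ∑' k : ℕ,
    (((nicfA α (k + 1) : ℝ) - 1 + (nicfE α (k + 1) : ℝ) + (lamStar α (k + 1) : ℝ)) / 2) *
      nicfD α (k + 1)

/-- `λ'_i`: zero if `a_i` is even, one if `a_i` is odd. -/
noncomputable def lamStar2 (α : ℝ) (i : ℕ) : ℤ := if Odd (nicfA α i) then 1 else 0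

/-- `γ_** = Σ_{i≥1} (a_i + λ'_i)/2 · D_{i-1}`. -/
noncomputable def gammaStar2 (α : ℝ) : ℝ :=
  ∑' k : ℕ, (((nicfA α (k + 1) : ℝ) + (lamStar2 α (k + 1) : ℝ)) / 2) * nicfD α (k + 1)

/-- The denominators `q_i`: `q_0 = 1`, `q_1 = a_1`, `q_i = a_i q_{i-1} + ε_i q_{i-2}`. -/
noncomputable def qseq (α : ℝ) : ℕ → ℤ
  | 0 => 1
  | 1 => nicfA α 1
  | i + 2 => nicfA α (i + 2) * qseq α (i + 1) + nicfE α (i + 2) * qseq α i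

/-- `ᾱ_i = q_{i-1}/q_i` (with `ᾱ_0 = 0`). -/
noncomputable def abar (α : ℝ) (i : ℕ) : ℝ :=
  if i = 0 then 0 else (qseq α (i - 1) : ℝ) / (qseq α i : ℝ)

/-- `δ_i = -(-ε_1)(-ε_2)⋯(-ε_{i+1})`. -/
noncomputable def deltaSeq (α : ℝ) (i : ℕ) : ℤ := -∏ j ∈ Finset.Icc 1 (i + 1), (-nicfE α j)

/-- `d_n^- = (Σ_{i=1}^n t_i δ_{i-1} q_{i-1}) / (δ_{n-1} q_n)` for `γ_*` (so `t_i = λ_i`). -/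
noncomputable def dminus (α : ℝ) (n : ℕ) : ℝ :=
  (∑ i ∈ Finset.Icc 1 n, (lamStar α i : ℝ) * (deltaSeq α (i - 1) : ℝ) * (qseq α (i - 1) : ℝ)) /
    ((deltaSeq α (n - 1) : ℝ) * (qseq α n : ℝ))

/-- `d_n^+ = (Σ_{i=n+1}^∞ t_i D_{i-1}) / D_{n-1}` for `γ_*` (so `t_i = λ_i`). -/
noncomputable def dplus (α : ℝ) (n : ℕ) : ℝ :=
  (∑' k : ℕ, (lamStar α (n + 1 + k) : ℝ) * nicfD α (n + 1 + k)) / nicfD α n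

/-- `d_n^-` for `γ_**` (so `t_i = λ'_i`). -/
noncomputable def dminus2 (α : ℝ) (n : ℕ) : ℝ :=
  (∑ i ∈ Finset.Icc 1 n, (lamStar2 α i : ℝ) * (deltaSeq α (i - 1) : ℝ) * (qseq α (i - 1) : ℝ)) /
    ((deltaSeq α (n - 1) : ℝ) * (qseq α n : ℝ))

/-- `d_n^+` for `γ_**` (so `t_i = λ'_i`). -/
noncomputable def dplus2 (α : ℝ) (n : ℕ) : ℝ :=
  (∑' k : ℕ, (lamStar2 α (n + 1 + k) : ℝ) * nicfD α (n + 1 + k)) / nicfD α n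

/-- `i ∈ S(γ_*)`: `|d_i^-| ≤ 1 - ᾱ_i` and `-(1-ε_{i+1}α_i) ≤ d_i^+ ≤ 1+ε_{i+1}α_i`. -/
def inS (α : ℝ) (i : ℕ) : Prop :=
  |dminus α i| ≤ 1 - abar α i ∧
    -(1 - (nicfE α (i + 1) : ℝ) * nicfT α i) ≤ dplus α i ∧
      dplus α i ≤ 1 + (nicfE α (i + 1) : ℝ) * nicfT α i

/-- `i ∈ S(γ_**)`. -/
def inS2 (α : ℝ) (i : ℕ) : Prop :=
  |dminus2 α i| ≤ 1 - abar α i ∧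
    -(1 - (nicfE α (i + 1) : ℝ) * nicfT α i) ≤ dplus2 α i ∧
      dplus2 α i ≤ 1 + (nicfE α (i + 1) : ℝ) * nicfT α i

/-- The remainders `γ_i` of the alpha-expansion of `γ`: `γ_0 = γ`,
`γ_{i+1} = {γ_i/α_i}`. -/
noncomputable def gSeq (α γ : ℝ) : ℕ → ℝ
  | 0 => γ
  | i + 1 => Int.fract (gSeq α γ i / nicfT α i)

/-- The coefficients `c_i` (for `i ≥ 1`) of the alpha-expansion of `γ`:
`c_{i+1} = ⌊γ_i/α_i⌋`. -/
noncomputable def cCoef (α γ : ℝ) (i : ℕ) : ℤ := ⌊gSeq α γ (i - 1) / nicfT α (i - 1)⌋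

/-!
`M(α, γ)` is the lower limit of `|x * y|` over the points `(x, y)` of the grid
`{(n, n * α - m - γ)}`, a translate of a lattice for which the convergents of the nearest integer
continued fraction provide a chain of bases `v j, v (j + 1)`. The linear form `det (v j, ·)` takes
on the grid the values `(1 + P j) / 2 + ℤ`. The points where two consecutive forms take
values `(±1 + P j) / 2` and `(±1 + P (j + 1)) / 2` are the vertices of level `j`, and only they can
have a small product.

The offsets `P` obey the recursion of the continued fraction, perturbed by an integer sequence `T`
which, when the products stay large, is bounded and satisfies `T j ≡ a j` modulo `2`. If all partial
quotients are close to `R = 1 / h`, the product at a vertex expands as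
`(1 + c₁ * h + c₂ * h ^ 2 + O(h ^ 3)) / 4` up to a factor common to all vertices of the level, with
`c₁, c₂` integer polynomials in a few terms of `T`. Hence the comparison with
`(1 - 3 * h + c * h ^ 2) / 4` is a lexicographic comparison of pairs of integers. The parity
condition and the period `-R, R, -(R + 1), R + 1` rule out that all vertices do better than the
claimed `c`, and an explicit `T` of period four attains it. By a fixed point argument every bounded
`T` of the right parity comes from a grid.
-/

/-! ### Second-order expansions -/

/-- The expansion `z = c₀ + c₁ h + c₂ h² + O(h³)`, where `B` bounds both the coefficients and the
implied constant. -/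
structure ExpandsTo (h B z c₀ c₁ c₂ : ℝ) : Prop where
  abs_c₀_le : |c₀| ≤ B
  abs_c₁_le : |c₁| ≤ B
  abs_c₂_le : |c₂| ≤ B
  abs_sub_le : |z - (c₀ + c₁ * h + c₂ * h ^ 2)| ≤ B * h ^ 3

namespace ExpandsTo

variable {h B B' z z' c₀ c₁ c₂ d₀ d₁ d₂ : ℝ}

lemma mono (hh : 0 ≤ h) (H : ExpandsTo h B z c₀ c₁ c₂) (hB : B ≤ B') :
    ExpandsTo h B' z c₀ c₁ c₂ :=
  ⟨H.1.trans hB, H.2.trans hB, H.3.trans hB, H.4.trans (by gcongr)⟩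

lemma const (hh : 0 ≤ h) {c : ℝ} (hc : |c| ≤ B) : ExpandsTo h B c c 0 0 := by
  have hB : 0 ≤ B := (abs_nonneg c).trans hc
  refine ⟨hc, by simpa, by simpa, ?_⟩
  simpa using by positivity

lemma add (H : ExpandsTo h B z c₀ c₁ c₂) (H' : ExpandsTo h B' z' d₀ d₁ d₂) :
    ExpandsTo h (B + B') (z + z') (c₀ + d₀) (c₁ + d₁) (c₂ + d₂) := by
  refine ⟨(abs_add_le _ _).trans (add_le_add H.1 H'.1),
    (abs_add_le _ _).trans (add_le_add H.2 H'.2), (abs_add_le _ _).trans (add_le_add H.3 H'.3), ?_⟩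
  calc |z + z' - (c₀ + d₀ + (c₁ + d₁) * h + (c₂ + d₂) * h ^ 2)|
      = |(z - (c₀ + c₁ * h + c₂ * h ^ 2)) + (z' - (d₀ + d₁ * h + d₂ * h ^ 2))| := by ring_nf
    _ ≤ B * h ^ 3 + B' * h ^ 3 := (abs_add_le _ _).trans (add_le_add H.4 H'.4)
    _ = (B + B') * h ^ 3 := by ring

lemma neg (H : ExpandsTo h B z c₀ c₁ c₂) : ExpandsTo h B (-z) (-c₀) (-c₁) (-c₂) := by
  refine ⟨by simpa using H.1, by simpa using H.2, by simpa using H.3, ?_⟩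
  rw [← abs_neg]
  convert H.4 using 2
  ring

lemma sub (H : ExpandsTo h B z c₀ c₁ c₂) (H' : ExpandsTo h B' z' d₀ d₁ d₂) :
    ExpandsTo h (B + B') (z - z') (c₀ - d₀) (c₁ - d₁) (c₂ - d₂) := by
  simpa only [sub_eq_add_neg] using H.add H'.neg

lemma abs_poly_le (hh : 0 ≤ h) (hh1 : h ≤ 1) (H : ExpandsTo h B z c₀ c₁ c₂) :
    |c₀ + c₁ * h + c₂ * h ^ 2| ≤ 3 * B := by
  have hB : 0 ≤ B := (abs_nonneg c₀).trans H.1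
  calc |c₀ + c₁ * h + c₂ * h ^ 2| ≤ |c₀| + |c₁| * |h| + |c₂| * |h| ^ 2 := by
        rw [← abs_pow, ← abs_mul, ← abs_mul]
        exact abs_add_three _ _ _
    _ ≤ B + B * 1 + B * 1 ^ 2 := by
        rw [abs_of_nonneg hh]
        gcongr
        exacts [H.1, H.2, H.3]
    _ = 3 * B := by ring

lemma abs_le (hh : 0 ≤ h) (hh1 : h ≤ 1) (H : ExpandsTo h B z c₀ c₁ c₂) : |z| ≤ 4 * B := by
  have hB : 0 ≤ B := (abs_nonneg c₀).trans H.1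
  have hcube : B * h ^ 3 ≤ B := mul_le_of_le_one_right hB (pow_le_one₀ hh hh1)
  have hsum := abs_add_le (z - (c₀ + c₁ * h + c₂ * h ^ 2)) (c₀ + c₁ * h + c₂ * h ^ 2)
  rw [sub_add_cancel] at hsum
  linarith [H.4, H.abs_poly_le hh hh1]

lemma mul (hh : 0 ≤ h) (hh1 : h ≤ 1) (H : ExpandsTo h B z c₀ c₁ c₂)
    (H' : ExpandsTo h B' z' d₀ d₁ d₂) :
    ExpandsTo h (10 * B * B') (z * z') (c₀ * d₀) (c₀ * d₁ + c₁ * d₀)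
      (c₀ * d₂ + c₁ * d₁ + c₂ * d₀) := by
  have hB : 0 ≤ B := (abs_nonneg c₀).trans H.1
  have hB' : 0 ≤ B' := (abs_nonneg d₀).trans H'.1
  have hBB : 0 ≤ B * B' := mul_nonneg hB hB'
  have abs_mul_le {u v : ℝ} (hu : |u| ≤ B) (hv : |v| ≤ B') : |u * v| ≤ B * B' := by
    rw [abs_mul]
    gcongr
  refine ⟨(abs_mul_le H.1 H'.1).trans (by linarith), (abs_add_le _ _).trans ?_,
    (abs_add_three _ _ _).trans ?_, ?_⟩
  · linarith [abs_mul_le H.1 H'.2, abs_mul_le H.2 H'.1]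
  · linarith [abs_mul_le H.1 H'.3, abs_mul_le H.2 H'.2, abs_mul_le H.3 H'.1]
  have tail : |c₁ * d₂ + c₂ * d₁ + c₂ * d₂ * h| ≤ 3 * (B * B') := by
    have : |c₂ * d₂ * h| ≤ B * B' := by
      rw [abs_mul, abs_of_nonneg hh]
      exact (mul_le_of_le_one_right (abs_nonneg _) hh1).trans (abs_mul_le H.3 H'.3)
    linarith [abs_add_three (c₁ * d₂) (c₂ * d₁) (c₂ * d₂ * h), abs_mul_le H.2 H'.3,
      abs_mul_le H.3 H'.2]
  set p := c₀ + c₁ * h + c₂ * h ^ 2 with hp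
  set p' := d₀ + d₁ * h + d₂ * h ^ 2 with hp'
  calc |z * z' - (c₀ * d₀ + (c₀ * d₁ + c₁ * d₀) * h + (c₀ * d₂ + c₁ * d₁ + c₂ * d₀) * h ^ 2)|
      = |(z - p) * z' + p * (z' - p') + (c₁ * d₂ + c₂ * d₁ + c₂ * d₂ * h) * h ^ 3| := by
        rw [hp, hp']
        ring_nf
    _ ≤ |z - p| * |z'| + |p| * |z' - p'|
          + |c₁ * d₂ + c₂ * d₁ + c₂ * d₂ * h| * h ^ 3 := by
        refine (abs_add_three _ _ _).trans_eq ?_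
        rw [abs_mul, abs_mul, abs_mul, abs_of_nonneg (pow_nonneg hh 3)]
    _ ≤ B * h ^ 3 * (4 * B') + 3 * B * (B' * h ^ 3) + 3 * (B * B') * h ^ 3 := by
        gcongr
        exacts [H.4, H'.abs_le hh hh1, H.abs_poly_le hh hh1, H'.4]
    _ = 10 * B * B' * h ^ 3 := by ring

lemma exists_of_abs_sub_le (hh : 0 < h) (h₀ : |c₀| ≤ B) (h₁ : |c₁| ≤ B)
    (hz : |z - (c₀ + c₁ * h)| ≤ B * h ^ 2) : ∃ c₂, ExpandsTo h B z c₀ c₁ c₂ := by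
  refine ⟨(z - (c₀ + c₁ * h)) / h ^ 2, h₀, h₁, ?_, ?_⟩
  · rwa [abs_div, abs_of_pos (pow_pos hh 2), div_le_iff₀ (pow_pos hh 2)]
  · have hB : 0 ≤ B := (abs_nonneg c₀).trans h₀
    rw [div_mul_cancel₀ _ (pow_pos hh 2).ne', ← sub_sub, sub_self, abs_zero]
    positivity

end ExpandsTo

section Reciprocal

variable {h R β s z : ℝ}

lemma mul_one_add_eq_of_mul_eq_one (hR : R * h = 1) (hz : z * (R + β + s) = 1) :
    z * (1 + β * h + s * h) = h := by
  linear_combination h * hz - z * hR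

lemma abs_le_two_mul_of_mul_eq_one (hh : 0 < h) (hh1 : h ≤ 1 / 100) (hR : R * h = 1)
    (hβ : 0 ≤ β) (hs : |s| ≤ 1) (hz : z * (R + β + s) = 1) : |z| ≤ 2 * h := by
  have hD : 1 / 2 ≤ 1 + β * h + s * h := by
    nlinarith [mul_nonneg hβ hh.le, neg_le_of_abs_le hs]
  have hzD : |z| * (1 + β * h + s * h) = h := by
    rw [← abs_of_nonneg (by linarith : 0 ≤ 1 + β * h + s * h), ← abs_mul,
      mul_one_add_eq_of_mul_eq_one hR hz, abs_of_pos hh]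
  nlinarith [abs_nonneg z]

lemma ExpandsTo.of_mul_eq_one (hh : 0 < h) (hh1 : h ≤ 1 / 100) (hR : R * h = 1)
    (hβ : |β| ≤ 1) (hs : |s| ≤ 2 * h) (hz : z * (R + β + s) = 1) :
    ExpandsTo h 20 z 0 1 (-β) := by
  refine ⟨by norm_num, by norm_num, by rw [abs_neg]; linarith, ?_⟩
  set D := 1 + β * h + s * h with hD
  have hD2 : 1 / 2 ≤ D := by
    rw [hD]
    nlinarith [neg_le_of_abs_le hβ, neg_le_of_abs_le hs]
  have hrem : (z - (0 + 1 * h + -β * h ^ 2)) * D = h ^ 2 * (β * (β + s) * h - s) := by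
    linear_combination mul_one_add_eq_of_mul_eq_one hR hz
  have hbound : |β * (β + s) * h - s| ≤ 5 * h := by
    have hβs : |β * (β + s)| ≤ 1 * 3 := by
      rw [abs_mul]
      gcongr
      linarith [abs_add_le β s]
    calc |β * (β + s) * h - s| ≤ |β * (β + s)| * h + |s| := by
          simpa only [abs_mul, abs_of_pos hh] using abs_sub (β * (β + s) * h) s
      _ ≤ 1 * 3 * h + 2 * h := by gcongr
      _ = 5 * h := by ring
  have habs : |z - (0 + 1 * h + -β * h ^ 2)| * D ≤ h ^ 2 * (5 * h) := by
    rw [← abs_of_nonneg (by linarith : 0 ≤ D), ← abs_mul, hrem, abs_mul,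
      abs_of_pos (pow_pos hh 2)]
    gcongr
  nlinarith [abs_nonneg (z - (0 + 1 * h + -β * h ^ 2)), pow_pos hh 3]

end Reciprocal

/-! ### Chains of lattice bases -/

/-- A chain of bases `v j, v (j + 1)` of the lattice `{(n, n α - m)}`, where
`v j = (q j, q j * α - p j)`: the first coordinates increase, the second coordinates are at least
halved at every step, and `v (j + 2) = a j * v (j + 1) + ε j * v j`. The convergents of the nearest
integer continued fraction of `α` form such a chain, and so do their tails. -/
structure LatticeChain (α : ℝ) where
  a : ℕ → ℤ
  ε : ℕ → ℤ
  q : ℕ → ℤ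
  p : ℕ → ℤ
  ε_eq : ∀ j, ε j = 1 ∨ ε j = -1
  q_add_two : ∀ j, q (j + 2) = a j * q (j + 1) + ε j * q j
  p_add_two : ∀ j, p (j + 2) = a j * p (j + 1) + ε j * p j
  det_sq : ∀ j, (q (j + 1) * p j - q j * p (j + 1)) ^ 2 = 1
  q_zero_nonneg : 0 ≤ q 0
  q_lt : ∀ j, q j < q (j + 1)
  sub_ne_zero : ∀ j, (q j : ℝ) * α - p j ≠ 0
  abs_sub_le : ∀ j, |(q (j + 1) : ℝ) * α - p (j + 1)| ≤ |(q j : ℝ) * α - p j| / 2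

namespace LatticeChain

variable {α : ℝ} (C : LatticeChain α)

lemma q_nonneg (j : ℕ) : 0 ≤ C.q j :=
  C.q_zero_nonneg.trans ((monotone_nat_of_le_succ fun j => (C.q_lt j).le) (Nat.zero_le j))

/-- The second coordinate `q j * α - p j` of the `j`-th vector of the chain. -/
def error (j : ℕ) : ℝ := C.q j * α - C.p j

/-- The ratio of consecutive first coordinates (the paper's `ᾱ`). -/
noncomputable def qRatio (j : ℕ) : ℝ := C.q j / C.q (j + 1)

/-- The signed ratio of consecutive second coordinates. -/
noncomputable def errorRatio (j : ℕ) : ℝ := C.error (j + 1) / C.error j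

/-- The linear form `det (v j, (x, y))`. -/
def form (j : ℕ) (x y : ℝ) : ℝ := C.q j * y - x * C.error j

/-- The chain with its first `s` vectors removed. -/
def shift (s : ℕ) : LatticeChain α where
  a j := C.a (s + j)
  ε j := C.ε (s + j)
  q j := C.q (s + j)
  p j := C.p (s + j)
  ε_eq j := C.ε_eq (s + j)
  q_add_two j := C.q_add_two (s + j)
  p_add_two j := C.p_add_two (s + j)
  det_sq j := C.det_sq (s + j)
  q_zero_nonneg := C.q_nonneg s
  q_lt j := C.q_lt (s + j)
  sub_ne_zero j := C.sub_ne_zero (s + j)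
  abs_sub_le j := C.abs_sub_le (s + j)

lemma abs_ε (j : ℕ) : |(C.ε j : ℝ)| = 1 := by
  rcases C.ε_eq j with h | h <;> simp [h]

lemma cast_q_nonneg (j : ℕ) : (0 : ℝ) ≤ C.q j := mod_cast C.q_nonneg j

lemma cast_q_succ_pos (j : ℕ) : (0 : ℝ) < C.q (j + 1) :=
  mod_cast (C.q_nonneg j).trans_lt (C.q_lt j)

lemma error_ne_zero (j : ℕ) : C.error j ≠ 0 := C.sub_ne_zero j

lemma abs_error_pos (j : ℕ) : 0 < |C.error j| := abs_pos.2 (C.error_ne_zero j)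

lemma abs_error_succ_le (j : ℕ) : |C.error (j + 1)| ≤ |C.error j| / 2 := C.abs_sub_le j

lemma tendsto_abs_error : Tendsto (fun j => |C.error j|) atTop (nhds 0) := by
  have hle (j : ℕ) : |C.error j| ≤ |C.error 0| * (1 / 2) ^ j := by
    induction j with
    | zero => simp
    | succ j ih =>
      rw [pow_succ]
      linarith [C.abs_error_succ_le j]
  have hgeom : Tendsto (fun j : ℕ => |C.error 0| * (1 / 2 : ℝ) ^ j) atTop (nhds 0) := by
    simpa using (tendsto_pow_atTop_nhds_zero_of_lt_one (by norm_num : (0 : ℝ) ≤ 1 / 2)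
      (by norm_num)).const_mul |C.error 0|
  exact squeeze_zero (fun _ => abs_nonneg _) hle hgeom

lemma qRatio_nonneg (j : ℕ) : 0 ≤ C.qRatio j :=
  div_nonneg (C.cast_q_nonneg j) (C.cast_q_succ_pos j).le

lemma qRatio_lt_one (j : ℕ) : C.qRatio j < 1 :=
  (div_lt_one (C.cast_q_succ_pos j)).2 (mod_cast C.q_lt j)

lemma qRatio_mul (j : ℕ) : C.qRatio j * C.q (j + 1) = C.q j :=
  div_mul_cancel₀ _ (C.cast_q_succ_pos j).ne'

lemma errorRatio_mul (j : ℕ) : C.errorRatio j * C.error j = C.error (j + 1) :=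
  div_mul_cancel₀ _ (C.error_ne_zero j)

lemma abs_errorRatio_le (j : ℕ) : |C.errorRatio j| ≤ 1 / 2 := by
  rw [errorRatio, abs_div, div_le_iff₀ (C.abs_error_pos j)]
  linarith [C.abs_error_succ_le j]

lemma half_le_one_sub_mul (j : ℕ) : 1 / 2 ≤ 1 - C.qRatio j * C.errorRatio j := by
  nlinarith [C.qRatio_nonneg j, C.qRatio_lt_one j, abs_le.1 (C.abs_errorRatio_le j)]

lemma error_add_two (j : ℕ) :
    C.error (j + 2) = C.a j * C.error (j + 1) + C.ε j * C.error j := by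
  simp only [error, C.q_add_two, C.p_add_two]
  push_cast
  ring

lemma form_add_two (j : ℕ) (x y : ℝ) :
    C.form (j + 2) x y = C.a j * C.form (j + 1) x y + C.ε j * C.form j x y := by
  simp only [form, C.error_add_two, C.q_add_two]
  push_cast
  ring

lemma qRatio_succ_mul (j : ℕ) : C.qRatio (j + 1) * (C.a j + C.ε j * C.qRatio j) = 1 := by
  have hq : (C.q (j + 2) : ℝ) = C.a j * C.q (j + 1) + C.ε j * C.q j := by
    exact_mod_cast C.q_add_two j
  apply mul_right_cancel₀ (C.cast_q_succ_pos j).ne'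
  linear_combination C.qRatio (j + 1) * C.ε j * C.qRatio_mul j + C.qRatio_mul (j + 1)
    - C.qRatio (j + 1) * hq

lemma errorRatio_mul_sub (j : ℕ) :
    C.errorRatio j * (C.a j - C.errorRatio (j + 1)) = -C.ε j := by
  apply mul_right_cancel₀ (C.error_ne_zero j)
  linear_combination (C.a j - C.errorRatio (j + 1)) * C.errorRatio_mul j
    - C.errorRatio_mul (j + 1) - C.error_add_two j

lemma neg_ε_mul_errorRatio_mul (j : ℕ) :
    -C.ε j * C.errorRatio j * (C.a j + -C.errorRatio (j + 1)) = 1 := by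
  have hε : (C.ε j : ℝ) ^ 2 = 1 := by rw [← sq_abs, C.abs_ε, one_pow]
  linear_combination (-C.ε j : ℝ) * C.errorRatio_mul_sub j + hε

lemma det_error_sq (j : ℕ) :
    (C.q (j + 1) * C.error j - C.q j * C.error (j + 1)) ^ 2 = 1 := by
  have hdet : ((C.q (j + 1) : ℝ) * C.p j - C.q j * C.p (j + 1)) ^ 2 = 1 := mod_cast C.det_sq j
  rw [← hdet, error, error]
  ring

lemma q_succ_mul_abs_error (j : ℕ) :
    C.q (j + 1) * |C.error j| * (1 - C.qRatio j * C.errorRatio j) = 1 := by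
  have hfactor : C.q (j + 1) * C.error j * (1 - C.qRatio j * C.errorRatio j)
      = C.q (j + 1) * C.error j - C.q j * C.error (j + 1) := by
    linear_combination (-C.errorRatio j * C.error j) * C.qRatio_mul j
      - C.q j * C.errorRatio_mul j
  have habs : |C.q (j + 1) * C.error j * (1 - C.qRatio j * C.errorRatio j)| = 1 := by
    rw [hfactor, ← sq_eq_sq₀ (abs_nonneg _) zero_le_one, sq_abs, C.det_error_sq, one_pow]
  rwa [abs_mul, abs_mul, abs_of_pos (C.cast_q_succ_pos j),
    abs_of_pos (one_half_pos.trans_le (C.half_le_one_sub_mul j))] at habs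

lemma abs_fst_eq (j : ℕ) (x y : ℝ) :
    |x| = C.q (j + 1) * |C.form j x y - C.qRatio j * C.form (j + 1) x y| := by
  rw [← abs_of_pos (C.cast_q_succ_pos j), ← abs_mul, ← sq_eq_sq₀ (abs_nonneg _) (abs_nonneg _),
    sq_abs, sq_abs, mul_sub, ← mul_assoc, mul_comm (C.q (j + 1) : ℝ) (C.qRatio j), C.qRatio_mul,
    form, form]
  linear_combination (-x ^ 2) * C.det_error_sq j

lemma abs_snd_eq (j : ℕ) (x y : ℝ) :
    |y| = |C.error j| * |C.form (j + 1) x y - C.errorRatio j * C.form j x y| := by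
  rw [← abs_mul, ← sq_eq_sq₀ (abs_nonneg _) (abs_nonneg _), sq_abs, sq_abs, mul_sub, ← mul_assoc,
    mul_comm (C.error j) (C.errorRatio j), C.errorRatio_mul, form, form]
  linear_combination (-y ^ 2) * C.det_error_sq j

lemma abs_mul_abs_mul_one_sub (j : ℕ) (x y : ℝ) :
    |x| * |y| * (1 - C.qRatio j * C.errorRatio j) =
      |(C.form j x y - C.qRatio j * C.form (j + 1) x y) *
        (C.form (j + 1) x y - C.errorRatio j * C.form j x y)| := by
  rw [C.abs_fst_eq j x y, C.abs_snd_eq j x y, abs_mul]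
  linear_combination |C.form j x y - C.qRatio j * C.form (j + 1) x y| *
    |C.form (j + 1) x y - C.errorRatio j * C.form j x y| * C.q_succ_mul_abs_error j

lemma exists_form_eq_add (x₀ y₀ : ℝ) (j : ℕ) (k l : ℤ) : ∃ n m : ℤ,
    C.form j (n + x₀) (n * α - m + y₀) = C.form j x₀ y₀ + k ∧
    C.form (j + 1) (n + x₀) (n * α - m + y₀) = C.form (j + 1) x₀ y₀ + l := by
  set d := C.q (j + 1) * C.p j - C.q j * C.p (j + 1) with hd
  have hdet : (d : ℝ) * (C.q (j + 1) * C.p j - C.q j * C.p (j + 1)) = 1 := by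
    have := C.det_sq j
    rw [← hd, sq] at this
    exact_mod_cast this
  refine ⟨d * (k * C.q (j + 1) - l * C.q j), d * (k * C.p (j + 1) - l * C.p j), ?_, ?_⟩ <;>
    simp only [form, error] <;> push_cast
  · linear_combination (k : ℝ) * hdet
  · linear_combination (l : ℝ) * hdet

lemma exists_int_form_eq_add (x₀ y₀ : ℝ) (j : ℕ) (n m : ℤ) :
    ∃ k : ℤ, C.form j (n + x₀) (n * α - m + y₀) = C.form j x₀ y₀ + k := by
  refine ⟨n * C.p j - m * C.q j, ?_⟩
  simp only [form, error]
  push_cast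
  ring

/-- The partial quotients of `C` take only the values `R` and `R + 1`, where `R = h⁻¹` is huge. -/
structure NearConstant (C : LatticeChain α) (R : ℤ) (h : ℝ) : Prop where
  h_pos : 0 < h
  h_le : h ≤ 1 / 10 ^ 30
  R_mul_h : (R : ℝ) * h = 1
  a_eq : ∀ j, C.a j = R ∨ C.a j = R + 1

namespace NearConstant

variable {C} {R : ℤ} {h : ℝ} (H : C.NearConstant R h)

include H

lemma shift (s : ℕ) : (C.shift s).NearConstant R h :=
  ⟨H.h_pos, H.h_le, H.R_mul_h, fun j => H.a_eq (s + j)⟩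

lemma h_le_one_div_hundred : h ≤ 1 / 100 := H.h_le.trans (by norm_num)

lemma excess_mem_Icc (j : ℕ) : (C.a j - R : ℝ) ∈ Set.Icc 0 1 := by
  rcases H.a_eq j with h | h <;> simp [h]

lemma abs_excess_le (j : ℕ) : |(C.a j - R : ℝ)| ≤ 1 := by
  rw [abs_of_nonneg (H.excess_mem_Icc j).1]
  exact (H.excess_mem_Icc j).2

lemma a_pos (j : ℕ) : (0 : ℝ) < C.a j := by
  have hR : (0 : ℝ) < R := pos_of_mul_pos_left (H.R_mul_h ▸ one_pos) H.h_pos.le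
  linarith [(H.excess_mem_Icc j).1]

lemma qRatio_succ_le (j : ℕ) : C.qRatio (j + 1) ≤ 2 * h := by
  refine (le_abs_self _).trans (abs_le_two_mul_of_mul_eq_one H.h_pos H.h_le_one_div_hundred
    H.R_mul_h (H.excess_mem_Icc j).1 (s := C.ε j * C.qRatio j) ?_ ?_)
  · rw [abs_mul, C.abs_ε, one_mul, abs_of_nonneg (C.qRatio_nonneg j)]
    exact (C.qRatio_lt_one j).le
  · rw [add_sub_cancel, C.qRatio_succ_mul]

lemma abs_errorRatio_le (j : ℕ) : |C.errorRatio j| ≤ 2 * h := by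
  have habs := abs_le_two_mul_of_mul_eq_one H.h_pos H.h_le_one_div_hundred H.R_mul_h
    (H.excess_mem_Icc j).1 (by rw [abs_neg]; linarith [C.abs_errorRatio_le (j + 1)])
    (by rw [add_sub_cancel, C.neg_ε_mul_errorRatio_mul])
  rwa [abs_mul, abs_neg, C.abs_ε, one_mul] at habs

lemma expandsTo_qRatio (j : ℕ) :
    ExpandsTo h 20 (C.qRatio (j + 2)) 0 1 (-(C.a (j + 1) - R)) := by
  refine .of_mul_eq_one H.h_pos H.h_le_one_div_hundred H.R_mul_h (H.abs_excess_le _)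
    (s := C.ε (j + 1) * C.qRatio (j + 1)) ?_ ?_
  · rw [abs_mul, C.abs_ε, one_mul, abs_of_nonneg (C.qRatio_nonneg _)]
    exact H.qRatio_succ_le j
  · rw [add_sub_cancel, C.qRatio_succ_mul]

lemma expandsTo_errorRatio (j : ℕ) :
    ExpandsTo h 20 (C.errorRatio j) 0 (-C.ε j) (C.ε j * (C.a j - R)) := by
  have hexp : ExpandsTo h 20 (-C.ε j * C.errorRatio j) 0 1 (-(C.a j - R)) :=
    .of_mul_eq_one H.h_pos H.h_le_one_div_hundred H.R_mul_h (H.abs_excess_le _)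
      (by rw [abs_neg]; exact H.abs_errorRatio_le (j + 1))
      (by rw [add_sub_cancel, C.neg_ε_mul_errorRatio_mul])
  rcases C.ε_eq j with hε | hε
  · simpa [hε] using hexp.neg
  · simpa [hε] using hexp

lemma expandsTo_inv_a (j : ℕ) : ExpandsTo h 20 (C.a j : ℝ)⁻¹ 0 1 (-(C.a j - R)) := by
  refine .of_mul_eq_one H.h_pos H.h_le_one_div_hundred H.R_mul_h (H.abs_excess_le _) (s := 0)
    (by simpa using H.h_pos.le) ?_
  rw [add_zero, add_sub_cancel]
  exact inv_mul_cancel₀ (H.a_pos j).ne'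

end NearConstant

/-! ### Vertices of a level -/

/-- `P j / 2` is the displacement from `1 / 2 + ℤ` of the values of `C.form j` on a grid; the
recursion of the forms turns into a recursion for `P` driven by a bounded integer sequence `T`. -/
structure IsOffset (h : ℝ) (T : ℕ → ℤ) (P : ℕ → ℝ) : Prop where
  a_mul : ∀ j, C.a j * P (j + 1) = T j + P (j + 2) - C.ε j * P j
  abs_le : ∀ j, |P j| ≤ 20 * h
  abs_T_le : ∀ j, |(T j : ℝ)| ≤ 20

/-- Up to sign, four times the product of the coordinates, multiplied by
`1 - C.qRatio j * C.errorRatio j`, of the point where the forms `j` and `j + 1` take the values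
`(σ + P j) / 2` and `(τ + P (j + 1)) / 2`. -/
noncomputable def vertexProd (P : ℕ → ℝ) (j : ℕ) (σ τ : ℤˣ) : ℝ :=
  (1 + (σ : ℤ) * P j - C.qRatio j * ((σ : ℤ) * (τ : ℤ) + (σ : ℤ) * P (j + 1))) *
    (1 + (τ : ℤ) * P (j + 1) - C.errorRatio j * ((σ : ℤ) * (τ : ℤ) + (τ : ℤ) * P j))

/-- The coefficient of `h` in the expansion of `C.vertexProd P (j + 2) σ τ`. -/
def vertexCoeff₁ (T : ℕ → ℤ) (j : ℕ) (σ τ : ℤˣ) : ℤ :=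
  σ * T (j + 1) + τ * T (j + 2) - (1 - C.ε (j + 2)) * (σ * τ)

/-- The coefficient of `h ^ 2` in the expansion of `C.vertexProd P (j + 2) σ τ`. -/
def vertexCoeff₂ (R : ℤ) (T : ℕ → ℤ) (j : ℕ) (σ τ : ℤˣ) : ℤ :=
  (σ * T (j + 1) - σ * τ) * (τ * T (j + 2) + C.ε (j + 2) * (σ * τ))
    - C.ε (j + 1) * σ * T j + τ * T (j + 3)
    - (C.a (j + 1) - R) * (σ * T (j + 1) - σ * τ)
    - (C.a (j + 2) - R) * (τ * T (j + 2) + C.ε (j + 2) * (σ * τ))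

lemma abs_mul_abs_eq_abs_vertexProd {P : ℕ → ℝ} {j : ℕ} {σ τ : ℤˣ} {x y : ℝ}
    (h₀ : C.form j x y = ((σ : ℤ) + P j) / 2)
    (h₁ : C.form (j + 1) x y = ((τ : ℤ) + P (j + 1)) / 2) :
    |x| * |y| * (1 - C.qRatio j * C.errorRatio j) = |C.vertexProd P j σ τ| / 4 := by
  have hfactor : (C.form j x y - C.qRatio j * C.form (j + 1) x y) *
      (C.form (j + 1) x y - C.errorRatio j * C.form j x y)
      = (σ : ℤ) * (τ : ℤ) * (C.vertexProd P j σ τ / 4) := by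
    rw [h₀, h₁, vertexProd]
    rcases Int.units_eq_one_or σ with rfl | rfl <;>
      rcases Int.units_eq_one_or τ with rfl | rfl <;> push_cast <;> ring
  have hsign : |((σ : ℤ) : ℝ) * ((τ : ℤ) : ℝ)| = 1 := by
    rcases Int.units_eq_one_or σ with rfl | rfl <;>
      rcases Int.units_eq_one_or τ with rfl | rfl <;> norm_num
  rw [C.abs_mul_abs_mul_one_sub, hfactor, abs_mul, hsign, one_mul, abs_div,
    Nat.abs_ofNat]

lemma toLex_lt_toLex_of_add_lt {h : ℝ} (hh : 0 < h) {m₁ n₁ m₂ n₂ : ℤ}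
    (hn : |(n₂ - n₁ : ℝ)| * h < 1) (hlt : m₁ * h + n₁ * h ^ 2 < m₂ * h + n₂ * h ^ 2) :
    toLex (m₁, n₁) < toLex (m₂, n₂) := by
  have hsmall : (n₂ - n₁ : ℝ) * h < 1 :=
    (mul_le_mul_of_nonneg_right (le_abs_self _) hh.le).trans_lt hn
  have hdiv : (m₁ : ℝ) < m₂ + (n₂ - n₁) * h := by
    refine lt_of_mul_lt_mul_right ?_ hh.le
    linear_combination hlt
  have hm : m₁ < m₂ + 1 := by exact_mod_cast hdiv.trans (add_lt_add_right hsmall _)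
  rw [Prod.Lex.toLex_lt_toLex]
  rcases (Int.lt_add_one_iff.1 hm).lt_or_eq with hm | rfl
  · exact .inl hm
  · refine .inr ⟨rfl, ?_⟩
    have : (n₁ : ℝ) < n₂ := lt_of_mul_lt_mul_right (by linarith) (pow_pos hh 2).le
    exact_mod_cast this

namespace NearConstant

variable {C} {R : ℤ} {h : ℝ} (H : C.NearConstant R h)
variable {T : ℕ → ℤ} {P : ℕ → ℝ} (S : C.IsOffset h T P)

include H

lemma expandsTo_threshold {c : ℝ} (hc : |c| ≤ 6) (j : ℕ) :
    ExpandsTo h (10 ^ 6)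
      ((1 - 3 * h + c * h ^ 2) * (1 - C.qRatio (j + 2) * C.errorRatio (j + 2)))
      1 (-3) (c + C.ε (j + 2)) := by
  have h0 : 0 ≤ h := H.h_pos.le
  have h1 : h ≤ 1 := H.h_le_one_div_hundred.trans (by norm_num)
  have hpoly : ExpandsTo h 6 (1 - 3 * h + c * h ^ 2) 1 (-3) c := by
    refine ⟨by norm_num, by norm_num, hc, ?_⟩
    rw [neg_mul, ← sub_eq_add_neg, sub_self, abs_zero]
    positivity
  have hratio := (ExpandsTo.const (c := 1) (B := 1) h0 (by simp)).sub
    ((H.expandsTo_qRatio j).mul h0 h1 (H.expandsTo_errorRatio (j + 2)))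
  convert (hpoly.mul h0 h1 hratio).mono h0 (by norm_num : _ ≤ (10 : ℝ) ^ 6) using 1 <;> ring

include S

lemma exists_expandsTo_offset (j : ℕ) : ∃ c₂, ExpandsTo h 60 (P (j + 1)) 0 (T j) c₂ := by
  have hh := H.h_pos
  refine ExpandsTo.exists_of_abs_sub_le hh (by norm_num) ((S.abs_T_le j).trans (by norm_num)) ?_
  have hrem : (P (j + 1) - (0 + T j * h)) * C.a j
      = P (j + 2) - C.ε j * P j - T j * ((C.a j - R) * h) := by
    linear_combination S.a_mul j - T j * H.R_mul_h
  have hbound : |P (j + 2) - C.ε j * P j - T j * ((C.a j - R) * h)| ≤ 60 * h := by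
    have hε : |C.ε j * P j| ≤ 20 * h := by
      rw [abs_mul, C.abs_ε, one_mul]
      exact S.abs_le j
    have hT : |T j * ((C.a j - R) * h)| ≤ 20 * (1 * h) := by
      rw [abs_mul, abs_mul, abs_of_pos hh]
      gcongr
      exacts [S.abs_T_le j, H.abs_excess_le j]
    linarith [abs_sub (P (j + 2) - C.ε j * P j) (T j * ((C.a j - R) * h)),
      abs_sub (P (j + 2)) (C.ε j * P j), S.abs_le (j + 2)]
  have hR : (R : ℝ) ≤ C.a j := by linarith [(H.excess_mem_Icc j).1]
  rw [← hrem, abs_mul, abs_of_pos (H.a_pos j)] at hbound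
  calc |P (j + 1) - (0 + T j * h)| = |P (j + 1) - (0 + T j * h)| * R * h := by
        rw [mul_assoc, H.R_mul_h, mul_one]
    _ ≤ |P (j + 1) - (0 + T j * h)| * C.a j * h := by gcongr
    _ ≤ 60 * h * h := by gcongr
    _ = 60 * h ^ 2 := by ring

lemma expandsTo_offset (j : ℕ) :
    ExpandsTo h (10 ^ 6) (P (j + 2)) 0 (T (j + 1))
      (T (j + 2) - C.ε (j + 1) * T j - (C.a (j + 1) - R) * T (j + 1)) := by
  have h0 : 0 ≤ h := H.h_pos.le
  have h1 : h ≤ 1 := H.h_le_one_div_hundred.trans (by norm_num)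
  obtain ⟨c, hnext⟩ := H.exists_expandsTo_offset S (j + 2)
  obtain ⟨d, hprev⟩ := H.exists_expandsTo_offset S j
  have hT := ExpandsTo.const h0 (S.abs_T_le (j + 1))
  have hε := ExpandsTo.const h0 (C.abs_ε (j + 1)).le
  have hexp := (((hT.add hnext).sub (hε.mul h0 h1 hprev)).mul h0 h1
    (H.expandsTo_inv_a (j + 1))).mono h0 (by norm_num : _ ≤ (10 : ℝ) ^ 6)
  have hP : P (j + 2) =
      (T (j + 1) + P (j + 3) - C.ε (j + 1) * P (j + 1)) * (C.a (j + 1) : ℝ)⁻¹ := by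
    rw [eq_mul_inv_iff_mul_eq₀ (H.a_pos _).ne', mul_comm]
    exact S.a_mul (j + 1)
  rw [hP]
  convert hexp using 1 <;> ring

lemma expandsTo_vertexProd (j : ℕ) (σ τ : ℤˣ) :
    ExpandsTo h (10 ^ 20) (C.vertexProd P (j + 2) σ τ) 1 (C.vertexCoeff₁ T j σ τ)
      (C.vertexCoeff₂ R T j σ τ) := by
  have h0 : 0 ≤ h := H.h_pos.le
  have h1 : h ≤ 1 := H.h_le_one_div_hundred.trans (by norm_num)
  have hunit (σ : ℤˣ) : ExpandsTo h 1 ((σ : ℤ) : ℝ) ((σ : ℤ) : ℝ) 0 0 := by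
    refine ExpandsTo.const h0 ?_
    rcases Int.units_eq_one_or σ with rfl | rfl <;> simp
  have hone : ExpandsTo h 1 1 1 0 0 := ExpandsTo.const h0 (by simp)
  have hP := H.expandsTo_offset S j
  have hQ := H.expandsTo_offset S (j + 1)
  have hστ := (hunit σ).mul h0 h1 (hunit τ)
  have hfst := (hone.add ((hunit σ).mul h0 h1 hP)).sub
    ((H.expandsTo_qRatio j).mul h0 h1 (hστ.add ((hunit σ).mul h0 h1 hQ)))
  have hsnd := (hone.add ((hunit τ).mul h0 h1 hQ)).sub
    ((H.expandsTo_errorRatio (j + 2)).mul h0 h1 (hστ.add ((hunit τ).mul h0 h1 hP)))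
  have hprod := (hfst.mul h0 h1 hsnd).mono h0 (by norm_num : _ ≤ (10 : ℝ) ^ 20)
  simp only [vertexProd, vertexCoeff₁, vertexCoeff₂]
  push_cast
  convert hprod using 1 <;> ring

lemma vertexProd_pos (j : ℕ) (σ τ : ℤˣ) : 0 < C.vertexProd P (j + 2) σ τ := by
  obtain ⟨-, hm, hn, hV⟩ := H.expandsTo_vertexProd S j σ τ
  have hh := H.h_pos
  have hh1 := H.h_le
  nlinarith [abs_le.1 hm, abs_le.1 hn, abs_le.1 hV]

lemma abs_sub_mul_lt_one {c : ℤ} (hc : |(c : ℝ)| ≤ 6) {j : ℕ} {σ τ : ℤˣ} :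
    |(C.vertexCoeff₂ R T j σ τ - (c + C.ε (j + 2) : ℤ) : ℝ)| * h < 1 := by
  have hn := (H.expandsTo_vertexProd S j σ τ).abs_c₂_le
  have hc' : |((c + C.ε (j + 2) : ℤ) : ℝ)| ≤ 6 + 1 := by
    push_cast
    exact (abs_add_le _ _).trans (add_le_add hc (C.abs_ε _).le)
  have hdiff := (abs_sub _ _).trans (add_le_add hn hc')
  nlinarith [H.h_pos, H.h_le]

lemma toLex_lt_of_le_vertexProd {c : ℤ} (hc : |(c : ℝ)| ≤ 6) {j : ℕ} {σ τ : ℤˣ}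
    (hV : (1 - 3 * h + c * h ^ 2 + 10 ^ 22 * h ^ 3) *
      (1 - C.qRatio (j + 2) * C.errorRatio (j + 2)) ≤ C.vertexProd P (j + 2) σ τ) :
    toLex (-3, c + C.ε (j + 2)) < toLex (C.vertexCoeff₁ T j σ τ, C.vertexCoeff₂ R T j σ τ) := by
  have hV' := H.expandsTo_vertexProd S j σ τ
  refine toLex_lt_toLex_of_add_lt H.h_pos (H.abs_sub_mul_lt_one S hc) ?_
  push_cast
  have hcube : 0 < h ^ 3 := pow_pos H.h_pos 3
  have hgap := mul_le_mul_of_nonneg_left (C.half_le_one_sub_mul (j + 2))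
    (by positivity : 0 ≤ 10 ^ 22 * h ^ 3)
  linarith [abs_le.1 (H.expandsTo_threshold hc j).abs_sub_le, abs_le.1 hV'.abs_sub_le]

lemma le_vertexProd_of_toLex_le {c : ℤ} (hc : |(c : ℝ)| ≤ 6) {j : ℕ} {σ τ : ℤˣ}
    (hle : toLex (-3, c + C.ε (j + 2)) ≤
      toLex (C.vertexCoeff₁ T j σ τ, C.vertexCoeff₂ R T j σ τ)) :
    (1 - 3 * h + c * h ^ 2 - 10 ^ 22 * h ^ 3) *
      (1 - C.qRatio (j + 2) * C.errorRatio (j + 2)) ≤ C.vertexProd P (j + 2) σ τ := by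
  have hV' := H.expandsTo_vertexProd S j σ τ
  have hlin : (-3 : ℤ) * h + (c + C.ε (j + 2) : ℤ) * h ^ 2
      ≤ C.vertexCoeff₁ T j σ τ * h + C.vertexCoeff₂ R T j σ τ * h ^ 2 := by
    contrapose! hle
    refine toLex_lt_toLex_of_add_lt H.h_pos ?_ hle
    rw [abs_sub_comm]
    exact H.abs_sub_mul_lt_one S hc
  push_cast at hlin
  have hcube : 0 < h ^ 3 := pow_pos H.h_pos 3
  have hgap := mul_le_mul_of_nonneg_left (C.half_le_one_sub_mul (j + 2))
    (by positivity : 0 ≤ 10 ^ 22 * h ^ 3)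
  linarith [abs_le.1 (H.expandsTo_threshold hc j).abs_sub_le, abs_le.1 hV'.abs_sub_le]

end NearConstant
end LatticeChain

/-! ### Vertices of an inhomogeneous grid -/

lemma nint_le_abs_sub (x : ℝ) (m : ℤ) : nint x ≤ |x - m| := round_le x m

lemma nint_pos {x : ℝ} (hx : ∀ m : ℤ, x ≠ m) : 0 < nint x := abs_pos.2 (sub_ne_zero.2 (hx _))

lemma exists_unit_mul_eq_neg_abs (x : ℝ) : ∃ σ : ℤˣ, (σ : ℤ) * x = -|x| := by
  rcases abs_choice x with hx | hx
  · exact ⟨-1, by simp [hx]⟩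
  · exact ⟨1, by simp [hx]⟩

namespace LatticeChain

variable {α : ℝ} (C : LatticeChain α)

lemma exists_vertex {x₀ y₀ : ℝ} {P : ℕ → ℝ} {j : ℕ} {k l : ℤ} (hP : ∀ j, |P j| ≤ 1)
    (hk : C.form j x₀ y₀ = (1 + P j) / 2 + k)
    (hl : C.form (j + 1) x₀ y₀ = (1 + P (j + 1)) / 2 + l) (σ τ : ℤˣ) :
    ∃ n m : ℤ, |n + x₀| * |n * α - m + y₀| * (1 - C.qRatio j * C.errorRatio j) =
      |C.vertexProd P j σ τ| / 4 ∧ |n * α - m + y₀| ≤ 2 * |C.error j| := by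
  have hunit (σ : ℤˣ) : ∃ s : ℤ, ((σ : ℤ) : ℝ) = 1 + 2 * s := by
    rcases Int.units_eq_one_or σ with rfl | rfl
    exacts [⟨0, by norm_num⟩, ⟨-1, by norm_num⟩]
  have hhalf (σ : ℤˣ) (j : ℕ) : |((σ : ℤ) + P j) / 2| ≤ 1 := by
    have := abs_le.1 (hP j)
    rw [abs_le]
    rcases Int.units_eq_one_or σ with rfl | rfl <;> push_cast <;> constructor <;> linarith
  obtain ⟨s, hs⟩ := hunit σ
  obtain ⟨t, ht⟩ := hunit τ
  obtain ⟨n, m, h₀, h₁⟩ := C.exists_form_eq_add x₀ y₀ j (s - k) (t - l)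
  replace h₀ : C.form j (n + x₀) (n * α - m + y₀) = ((σ : ℤ) + P j) / 2 := by
    rw [h₀, hk, hs]
    push_cast
    ring
  replace h₁ : C.form (j + 1) (n + x₀) (n * α - m + y₀) = ((τ : ℤ) + P (j + 1)) / 2 := by
    rw [h₁, hl, ht]
    push_cast
    ring
  refine ⟨n, m, C.abs_mul_abs_eq_abs_vertexProd h₀ h₁, ?_⟩
  have hratio : |C.errorRatio j * (((σ : ℤ) + P j) / 2)| ≤ 1 / 2 * 1 := by
    rw [abs_mul]
    gcongr
    exacts [C.abs_errorRatio_le j, hhalf σ j]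
  rw [C.abs_snd_eq j, h₀, h₁, mul_comm]
  gcongr
  linarith [abs_sub (((τ : ℤ) + P (j + 1)) / 2) (C.errorRatio j * (((σ : ℤ) + P j) / 2)),
    hhalf τ (j + 1)]

/-- The offset of the grid `{(n, n * α - m - γ)}` at level `j`: the values of `C.form j` on it are
`(1 + C.offset γ j) / 2` modulo `1`. -/
noncomputable def offset (γ : ℝ) (j : ℕ) : ℝ := 2 * Int.fract (C.form j 0 (-γ)) - 1

lemma abs_offset_le_one (γ : ℝ) (j : ℕ) : |C.offset γ j| ≤ 1 := by
  have h0 := Int.fract_nonneg (C.form j 0 (-γ))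
  have h1 := Int.fract_lt_one (C.form j 0 (-γ))
  rw [offset, abs_le]
  constructor <;> linarith

lemma form_zero_neg (γ : ℝ) (j : ℕ) :
    C.form j 0 (-γ) = (1 + C.offset γ j) / 2 + (⌊C.form j 0 (-γ)⌋ : ℤ) := by
  rw [offset]
  linarith [Int.fract_add_floor (C.form j 0 (-γ))]

lemma exists_forall_le_abs_vertexProd {γ m₀ : ℝ}
    (hγ : ¬∃ p q : ℤ, γ = (p : ℝ) + (q : ℝ) * α)
    (hm₀ : ∀ᶠ n : ℤ in cofinite, m₀ < (|n| : ℝ) * nint (n * α - γ)) :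
    ∃ J, ∀ j ≥ J, ∀ σ τ : ℤˣ,
      4 * m₀ * (1 - C.qRatio j * C.errorRatio j) ≤ |C.vertexProd (C.offset γ) j σ τ| := by
  have hpos (n : ℤ) : 0 < nint (n * α - γ) := by
    refine nint_pos fun m hm => hγ ⟨-m, n, ?_⟩
    push_cast
    linarith
  -- Points of the grid close to the first axis avoid the finitely many exceptional `n`.
  have hδ : ∀ᶠ δ in nhds (0 : ℝ), ∀ n ∈ {n : ℤ | ¬m₀ < (|n| : ℝ) * nint (n * α - γ)},
      δ < nint (n * α - γ) :=
    (eventually_all_finite hm₀).2 fun n _ => eventually_lt_nhds (hpos n)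
  have hlim : Tendsto (fun j => 2 * |C.error j|) atTop (nhds 0) := by
    simpa using C.tendsto_abs_error.const_mul 2
  obtain ⟨J, hJ⟩ := eventually_atTop.1 (hlim.eventually hδ)
  refine ⟨J, fun j hj σ τ => ?_⟩
  obtain ⟨n, m, hprod, hsnd⟩ := C.exists_vertex (C.abs_offset_le_one γ) (C.form_zero_neg γ j)
    (C.form_zero_neg γ (j + 1)) σ τ
  rw [add_zero] at hprod
  have hnint : nint (n * α - γ) ≤ |n * α - m + -γ| :=
    (nint_le_abs_sub _ m).trans_eq (by congr 1; ring)
  have hn : m₀ < |(n : ℝ)| * nint (n * α - γ) := by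
    by_contra hn
    exact (hJ j hj n hn).not_ge (hnint.trans hsnd)
  have hle : m₀ ≤ |(n : ℝ)| * |n * α - m + -γ| :=
    hn.le.trans (mul_le_mul_of_nonneg_left hnint (abs_nonneg _))
  nlinarith [C.half_le_one_sub_mul j]

lemma abs_vertexProd_le_mul {P : ℕ → ℝ} {j : ℕ} {σ τ : ℤˣ} {A B : ℝ} (hP : ∀ j, |P j| ≤ 1)
    (hσ : (σ : ℤ) * P j = -|P j|) (hτ : (τ : ℤ) * P (j + 1) = -|P (j + 1)|)
    (hA : |C.qRatio j| ≤ A) (hB : |C.errorRatio j| ≤ B) :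
    |C.vertexProd P j σ τ| ≤ (1 - |P j| + A) * (1 - |P (j + 1)| + B) := by
  have hsq (σ : ℤˣ) : (((σ : ℤ) : ℝ)) * ((σ : ℤ) : ℝ) = 1 := by
    rcases Int.units_eq_one_or σ with rfl | rfl <;> norm_num
  have habs : |((σ : ℤ) : ℝ) * ((τ : ℤ) : ℝ)| = 1 := by
    rw [← abs_one, abs_eq_abs, ← sq_eq_sq_iff_eq_or_eq_neg]
    linear_combination (τ : ℤ) * (τ : ℤ) * hsq σ + hsq τ
  have hfst : ((σ : ℤ) : ℝ) * (τ : ℤ) + (σ : ℤ) * P (j + 1)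
      = (σ : ℤ) * (τ : ℤ) * (1 - |P (j + 1)|) := by
    linear_combination (-((σ : ℤ) : ℝ) * P (j + 1)) * hsq τ + (σ : ℤ) * (τ : ℤ) * hτ
  have hsnd : ((σ : ℤ) : ℝ) * (τ : ℤ) + (τ : ℤ) * P j = (σ : ℤ) * (τ : ℤ) * (1 - |P j|) := by
    linear_combination (-((τ : ℤ) : ℝ) * P j) * hsq σ + (σ : ℤ) * (τ : ℤ) * hσ
  have hbound {p q r D : ℝ} (hp : |p| ≤ 1) (hq : |q| ≤ 1) (hr : |r| ≤ D) :
      |1 + -|p| - r * ((σ : ℤ) * (τ : ℤ) * (1 - |q|))| ≤ 1 - |p| + D := by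
    refine (abs_sub _ _).trans ?_
    rw [abs_mul, abs_mul, habs, abs_of_nonneg (by linarith : 0 ≤ 1 - |q|),
      abs_of_nonneg (by linarith : 0 ≤ 1 + -|p|)]
    nlinarith [abs_nonneg q, abs_nonneg r]
  rw [vertexProd, abs_mul, hfst, hsnd, hσ, hτ]
  exact mul_le_mul (hbound (hP _) (hP _) hA) (hbound (hP _) (hP _) hB) (abs_nonneg _)
    (by linarith [hP j, abs_nonneg (C.qRatio j)])

include C in
lemma not_eventually_two_lt {γ : ℝ} (hγ : ¬∃ p q : ℤ, γ = (p : ℝ) + (q : ℝ) * α) :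
    ¬∀ᶠ n : ℤ in cofinite, (2 : ℝ) < (|n| : ℝ) * nint (n * α - γ) := by
  intro h
  obtain ⟨J, hJ⟩ := C.exists_forall_le_abs_vertexProd hγ h
  obtain ⟨σ, hσ⟩ := exists_unit_mul_eq_neg_abs (C.offset γ J)
  obtain ⟨τ, hτ⟩ := exists_unit_mul_eq_neg_abs (C.offset γ (J + 1))
  have hle := C.abs_vertexProd_le_mul (A := 1) (C.abs_offset_le_one γ) hσ hτ
    (by rw [abs_of_nonneg (C.qRatio_nonneg J)]; exact (C.qRatio_lt_one J).le)
    (C.abs_errorRatio_le J)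
  nlinarith [hJ J le_rfl σ τ, C.half_le_one_sub_mul J, abs_nonneg (C.offset γ J),
    abs_nonneg (C.offset γ (J + 1)), C.abs_offset_le_one γ J, C.abs_offset_le_one γ (J + 1)]

namespace NearConstant

variable {C} {R : ℤ} {h : ℝ} (H : C.NearConstant R h)

include H

lemma abs_offset_le {γ : ℝ} {j : ℕ}
    (hV : ∀ σ τ : ℤˣ, (1 - 4 * h) * (1 - C.qRatio (j + 1) * C.errorRatio (j + 1)) ≤
      |C.vertexProd (C.offset γ) (j + 1) σ τ|) :
    |C.offset γ (j + 1)| ≤ 16 * h := by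
  have hh := H.h_pos
  have hh1 := H.h_le_one_div_hundred
  obtain ⟨σ, hσ⟩ := exists_unit_mul_eq_neg_abs (C.offset γ (j + 1))
  obtain ⟨τ, hτ⟩ := exists_unit_mul_eq_neg_abs (C.offset γ (j + 2))
  have hq : |C.qRatio (j + 1)| ≤ 2 * h := by
    rw [abs_of_nonneg (C.qRatio_nonneg _)]
    exact H.qRatio_succ_le j
  have hle := C.abs_vertexProd_le_mul (C.abs_offset_le_one γ) hσ hτ hq (H.abs_errorRatio_le (j + 1))
  have hmul : C.qRatio (j + 1) * C.errorRatio (j + 1) ≤ 2 * h * (2 * h) := by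
    refine (le_abs_self _).trans ?_
    rw [abs_mul]
    gcongr
    exact H.abs_errorRatio_le (j + 1)
  have hlow : 1 - 8 * h ≤ (1 - |C.offset γ (j + 1)| + 2 * h) * (1 + 2 * h) :=
    calc 1 - 8 * h ≤ (1 - 4 * h) * (1 - 2 * h * (2 * h)) := by nlinarith [mul_pos hh hh]
      _ ≤ (1 - 4 * h) * (1 - C.qRatio (j + 1) * C.errorRatio (j + 1)) := by
        apply mul_le_mul_of_nonneg_left <;> linarith
      _ ≤ _ := (hV σ τ).trans hle
      _ ≤ _ := by
        gcongr
        · linarith [C.abs_offset_le_one γ (j + 1)]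
        · linarith [abs_nonneg (C.offset γ (j + 2))]
  nlinarith

lemma exists_isOffset {γ : ℝ} (hP : ∀ j, |C.offset γ j| ≤ 16 * h) :
    ∃ T : ℕ → ℤ, C.IsOffset h T (C.offset γ) ∧ ∀ j, T j % 2 = C.a j % 2 := by
  set k : ℕ → ℤ := fun j => ⌊C.form j 0 (-γ)⌋ with hk
  set T : ℕ → ℤ := fun j =>
    -2 * (C.a j * k (j + 1) + C.ε j * k j - k (j + 2)) + 1 - C.a j - C.ε j with hT
  have hrec (j : ℕ) : C.a j * C.offset γ (j + 1) =
      T j + C.offset γ (j + 2) - C.ε j * C.offset γ j := by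
    simp only [hT, hk]
    push_cast
    linear_combination -2 * C.form_add_two j 0 (-γ) + 2 * C.form_zero_neg γ (j + 2)
      - 2 * (C.a j : ℝ) * C.form_zero_neg γ (j + 1) - 2 * (C.ε j : ℝ) * C.form_zero_neg γ j
  refine ⟨T, ⟨hrec, fun j => (hP j).trans (by linarith [H.h_pos]), fun j => ?_⟩, fun j => ?_⟩
  · have hT' : (T j : ℝ) = C.a j * C.offset γ (j + 1) +
        (C.ε j * C.offset γ j - C.offset γ (j + 2)) := by linarith [hrec j]
    have hprev : |C.ε j * C.offset γ j| ≤ 16 * h := by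
      rw [abs_mul, C.abs_ε, one_mul]
      exact hP j
    have hlin : |C.a j * C.offset γ (j + 1)| ≤ (R + 1) * (16 * h) := by
      rw [abs_mul, abs_of_pos (H.a_pos j)]
      have ha : (C.a j : ℝ) ≤ R + 1 := by linarith [(H.excess_mem_Icc j).2]
      exact mul_le_mul ha (hP _) (abs_nonneg _) ((H.a_pos j).le.trans ha)
    rw [hT']
    linarith [abs_add_le (C.a j * C.offset γ (j + 1)) (C.ε j * C.offset γ j - C.offset γ (j + 2)),
      abs_sub (C.ε j * C.offset γ j) (C.offset γ (j + 2)), hP (j + 2), H.R_mul_h,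
      H.h_le_one_div_hundred]
  · simp only [hT]
    rcases C.ε_eq j with hε | hε <;> rw [hε] <;> omega

end NearConstant
end LatticeChain

/-! ### Admissible integer sequences -/

/-- The constraint which `LatticeChain.IsAdmissible` imposes at a level of sign `-1` preceded by one
of sign `1`, for the vertices with `σ = τ`; here `s, u, w, v` are consecutive terms of the sequence
and `b₁, b₂` are the excesses over `R` of the two middle partial quotients. -/
def DiagCond (c b₁ b₂ s u w v : ℤ) : Prop :=
  ∀ σ : ℤˣ, -1 ≤ σ * (u + w) ∧ (σ * (u + w) = -1 →
    c - 1 ≤ (σ * u - 1) * (σ * w - 1) - σ * (s - v) - b₁ * (σ * u - 1) - b₂ * (σ * w - 1))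

section DiagCond

variable {c b₁ b₂ s s₁ s₂ u u₁ u₂ v w w₁ w₂ : ℤ}

lemma DiagCond.neg_reverse (h : DiagCond c b₁ b₂ s u w v) :
    DiagCond c b₂ b₁ (-v) w u (-s) := fun σ => by
  obtain ⟨h₁, h₂⟩ := h σ
  exact ⟨by linarith, fun h => by linarith [h₂ (by linarith)]⟩

lemma DiagCond.eq_zero_of_even (h : DiagCond 5 1 0 s u w v) (hu : u = 1 ∨ u = -1)
    (hs : s = 1 ∨ s = -1) (hw : w % 2 = 0) (hwv : w.natAbs + v.natAbs ≤ 3) (hv : v % 2 = 0) :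
    w = 0 ∧ u * v ≤ u * s := by
  have hpos := h 1
  have hneg := h (-1)
  simp only [Units.val_one, Units.val_neg] at hpos hneg
  rcases hu with rfl | rfl <;> omega

lemma DiagCond.eq_zero_of_odd (h : DiagCond 6 0 1 s u w v) (hu : u = 1 ∨ u = -1)
    (hs : s = 1 ∨ s = -1) (hw : w % 2 = 0) (hwv : w.natAbs + v.natAbs ≤ 3) (hv : v % 2 = 0) :
    w = 0 ∧ 2 ≤ u * (s - v) := by
  have hpos := h 1
  have hneg := h (-1)
  simp only [Units.val_one, Units.val_neg] at hpos hneg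
  rcases hu with rfl | rfl <;> omega

end DiagCond

namespace LatticeChain

variable {α : ℝ} (C : LatticeChain α)

/-- The partial quotients and signs of `C` cycle through `-R, R, -(R + 1), R + 1`. -/
structure IsPeriodic (R : ℤ) : Prop where
  a_eq : ∀ j, C.a j = if j % 4 < 2 then R else R + 1
  ε_eq : ∀ j, C.ε j = if j % 2 = 0 then -1 else 1

/-- Up to `O(h ^ 3)`, every vertex product of the offsets generated by `T` is at least
`(1 - 3 * h + c * h ^ 2) * (1 - C.qRatio j * C.errorRatio j)`. -/
def IsAdmissible (R c : ℤ) (T : ℕ → ℤ) : Prop :=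
  ∀ j σ τ, toLex (-3, c + C.ε (j + 2)) ≤
    toLex (C.vertexCoeff₁ T j σ τ, C.vertexCoeff₂ R T j σ τ)

variable {C} {R c : ℤ} {T : ℕ → ℤ}

lemma IsPeriodic.shift (hC : C.IsPeriodic R) (s : ℕ) : (C.shift (4 * s)).IsPeriodic R where
  a_eq j := by
    rw [← Nat.mul_add_mod 4 s j]
    exact hC.a_eq (4 * s + j)
  ε_eq j := by
    rw [← show (4 * s + j) % 2 = j % 2 by omega]
    exact hC.ε_eq (4 * s + j)

lemma IsPeriodic.nearConstant (hC : C.IsPeriodic R) {h : ℝ} (h_pos : 0 < h) (h_le : h ≤ 1 / 10 ^ 30)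
    (R_mul_h : (R : ℝ) * h = 1) : C.NearConstant R h :=
  ⟨h_pos, h_le, R_mul_h, fun j => by
    rw [hC.a_eq]
    split_ifs <;> simp⟩

namespace IsAdmissible

variable (hT : C.IsAdmissible R c T)

include hT

lemma diagCond {j : ℕ} (hε₁ : C.ε (j + 1) = 1) (hε₂ : C.ε (j + 2) = -1) :
    DiagCond c (C.a (j + 1) - R) (C.a (j + 2) - R) (T j) (T (j + 1)) (T (j + 2)) (T (j + 3)) := by
  intro σ
  have hσ : (σ : ℤ) * σ = 1 := by rw [← Units.val_mul, Int.units_mul_self, Units.val_one]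
  obtain ⟨h₁, h₂⟩ := Prod.Lex.toLex_le_toLex'.1 (hT j σ σ)
  simp only [vertexCoeff₁, vertexCoeff₂, hε₁, hε₂, hσ] at h₁ h₂
  exact ⟨by linarith, fun h => by linarith [h₂ (by linarith)]⟩

lemma natAbs_add_natAbs_le {j : ℕ} (hε : C.ε (j + 2) = 1) :
    (T (j + 1)).natAbs + (T (j + 2)).natAbs ≤ 3 := by
  have h (σ τ : ℤˣ) : -3 ≤ σ * T (j + 1) + τ * T (j + 2) := by
    simpa [vertexCoeff₁, hε] using (Prod.Lex.toLex_le_toLex'.1 (hT j σ τ)).1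
  have h₁₁ := h 1 1
  have h₁₂ := h 1 (-1)
  have h₂₁ := h (-1) 1
  have h₂₂ := h (-1) (-1)
  simp only [Units.val_one, Units.val_neg] at h₁₁ h₁₂ h₂₁ h₂₂
  omega

end IsAdmissible

namespace IsPeriodic

variable (hC : C.IsPeriodic R)

include hC

lemma natAbs_add_natAbs_le (hT : C.IsAdmissible R c T) (i : ℕ) :
    (T (4 * i + 2)).natAbs + (T (4 * i + 3)).natAbs ≤ 3 ∧
      (T (4 * i + 4)).natAbs + (T (4 * i + 5)).natAbs ≤ 3 := by
  constructor <;> refine hT.natAbs_add_natAbs_le ?_ <;> rw [hC.ε_eq, if_neg (by omega)]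

lemma diagCond_four_mul_add_two (hT : C.IsAdmissible R c T) (i : ℕ) :
    DiagCond c 1 0 (T (4 * i + 2)) (T (4 * i + 3)) (T (4 * i + 4)) (T (4 * i + 5)) := by
  have h := hT.diagCond (j := 4 * i + 2) (by rw [hC.ε_eq, if_neg (by omega)])
    (by rw [hC.ε_eq, if_pos (by omega)])
  rwa [hC.a_eq, if_neg (by omega), hC.a_eq, if_pos (by omega), add_sub_cancel_left,
    sub_self] at h

lemma diagCond_four_mul_add_four (hT : C.IsAdmissible R c T) (i : ℕ) :
    DiagCond c 0 1 (T (4 * i + 4)) (T (4 * i + 5)) (T (4 * i + 6)) (T (4 * i + 7)) := by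
  have h := hT.diagCond (j := 4 * i + 4) (by rw [hC.ε_eq, if_neg (by omega)])
    (by rw [hC.ε_eq, if_pos (by omega)])
  rwa [hC.a_eq, if_pos (by omega), hC.a_eq, if_neg (by omega), add_sub_cancel_left,
    sub_self] at h

lemma emod_two_eq (hpar : ∀ j, T j % 2 = C.a j % 2) (i : ℕ) :
    (T (4 * i + 2) % 2 = (R + 1) % 2 ∧ T (4 * i + 3) % 2 = (R + 1) % 2) ∧
      T (4 * i + 4) % 2 = R % 2 ∧ T (4 * i + 5) % 2 = R % 2 := by
  simp only [hpar, hC.a_eq]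
  rw [if_neg (by omega), if_neg (by omega), if_pos (by omega), if_pos (by omega)]
  exact ⟨⟨rfl, rfl⟩, rfl, rfl⟩

lemma eq_and_eq_neg_of_even (hR : Even R) (hpar : ∀ j, T j % 2 = C.a j % 2)
    (hT : C.IsAdmissible R 5 T) (i : ℕ) :
    T (4 * i + 2) = T (4 * i + 3) ∧ T (4 * i + 6) = -T (4 * i + 7) := by
  have hodd (i : ℕ) : (T (4 * i + 2) = 1 ∨ T (4 * i + 2) = -1) ∧
      (T (4 * i + 3) = 1 ∨ T (4 * i + 3) = -1) := by
    have := hC.natAbs_add_natAbs_le hT i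
    have := hC.emod_two_eq hpar i
    grind
  have heven : T (4 * i + 4) % 2 = 0 ∧ T (4 * i + 5) % 2 = 0 := by
    have := hC.emod_two_eq hpar i
    grind
  have hle := (hC.natAbs_add_natAbs_le hT i).2
  obtain ⟨hs₁, hs₂⟩ := hodd i
  obtain ⟨hw₁, hw₂⟩ : (T (4 * i + 6) = 1 ∨ T (4 * i + 6) = -1) ∧
    (T (4 * i + 7) = 1 ∨ T (4 * i + 7) = -1) := hodd (i + 1)
  obtain ⟨hu₁, hs⟩ := (hC.diagCond_four_mul_add_two hT i).eq_zero_of_even hs₂ hs₁ heven.1 hle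
    heven.2
  obtain ⟨hu₂, hw⟩ := (hC.diagCond_four_mul_add_four hT i).neg_reverse.eq_zero_of_even hw₁
    (by omega) heven.2 (by omega) (by omega)
  grind

lemma not_isAdmissible_of_even (hR : Even R) (hpar : ∀ j, T j % 2 = C.a j % 2) :
    ¬C.IsAdmissible R 5 T := by
  intro hT
  have hneg : T 6 = -T 7 := (hC.eq_and_eq_neg_of_even hR hpar hT 0).2
  have hpos : T 6 = T 7 := (hC.eq_and_eq_neg_of_even hR hpar hT 1).1
  have hodd : T 6 % 2 = (R + 1) % 2 := (hC.emod_two_eq hpar 1).1.1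
  grind

lemma not_isAdmissible_of_odd (hR : Odd R) (hpar : ∀ j, T j % 2 = C.a j % 2) :
    ¬C.IsAdmissible R 6 T := by
  intro hT
  have hR' := Int.odd_iff.1 hR
  obtain ⟨⟨-, -⟩, h₄, h₅⟩ := hC.emod_two_eq hpar 0
  obtain ⟨⟨h₆, h₇⟩, h₈, h₉⟩ := hC.emod_two_eq hpar 1
  have h₄₅ := (hC.natAbs_add_natAbs_le hT 0).2
  obtain ⟨h₆₇, h₈₉⟩ := hC.natAbs_add_natAbs_le hT 1
  simp only [mul_zero, mul_one, zero_add, Nat.reduceAdd] at h₄ h₅ h₆ h₇ h₈ h₉ h₄₅ h₆₇ h₈₉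
  have hD₄ : DiagCond 6 0 1 (T 4) (T 5) (T 6) (T 7) := hC.diagCond_four_mul_add_four hT 0
  have hD₆ : DiagCond 6 1 0 (T 6) (T 7) (T 8) (T 9) := hC.diagCond_four_mul_add_two hT 1
  obtain ⟨-, hs⟩ := hD₄.eq_zero_of_odd (by omega) (by omega) (by omega) (by omega) (by omega)
  obtain ⟨hu, -⟩ := hD₆.neg_reverse.eq_zero_of_odd (by omega) (by omega) (by omega) (by omega)
    (by omega)
  obtain h | h : T 5 = 1 ∨ T 5 = -1 := by omega
  all_goals rw [h, hu] at hs; omega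

end IsPeriodic

lemma NearConstant.exists_forall_isAdmissible {h : ℝ} (H : C.NearConstant R h)
    (hc : c ∈ Set.Icc 0 6) {γ : ℝ} (hγ : ¬∃ p q : ℤ, γ = (p : ℝ) + (q : ℝ) * α)
    (hlt : ∀ᶠ n : ℤ in cofinite,
      (1 - 3 * h + c * h ^ 2 + 10 ^ 22 * h ^ 3) / 4 < (|n| : ℝ) * nint (n * α - γ)) :
    ∃ J, ∀ s ≥ J, ∃ T : ℕ → ℤ,
      (∀ j, T j % 2 = (C.shift s).a j % 2) ∧ (C.shift s).IsAdmissible R (c + 1) T := by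
  obtain ⟨J, hJ⟩ := C.exists_forall_le_abs_vertexProd hγ hlt
  simp only [mul_div_cancel₀ _ (four_ne_zero' ℝ)] at hJ
  have hh := H.h_pos
  have hc0 : (0 : ℝ) ≤ c := mod_cast hc.1
  have hc6 : |(c : ℝ)| ≤ 6 := by
    rw [abs_of_nonneg hc0]
    exact_mod_cast hc.2
  have hsmall (j : ℕ) (hj : J ≤ j) : |C.offset γ (j + 1)| ≤ 16 * h := by
    refine H.abs_offset_le fun σ τ => le_trans ?_ (hJ (j + 1) (by omega) σ τ)
    have hpos : 0 ≤ c * h ^ 2 + 10 ^ 22 * h ^ 3 := by positivity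
    exact mul_le_mul_of_nonneg_right (by linarith) (by linarith [C.half_le_one_sub_mul (j + 1)])
  refine ⟨J + 1, fun s hs => ?_⟩
  obtain ⟨T, S, hpar⟩ := (H.shift s).exists_isOffset (γ := γ) fun j => by
    have := hsmall (s + j - 1) (by omega)
    rwa [Nat.sub_add_cancel (by omega)] at this
  refine ⟨T, hpar, fun j σ τ => ?_⟩
  have hlex := (H.shift s).toLex_lt_of_le_vertexProd S hc6 (j := j) (σ := σ) (τ := τ) <| by
    rw [← abs_of_pos ((H.shift s).vertexProd_pos S j σ τ)]
    exact hJ (s + (j + 2)) (by omega) σ τ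
  rw [Prod.Lex.toLex_lt_toLex] at hlex
  rw [Prod.Lex.toLex_le_toLex]
  omega

lemma IsPeriodic.not_eventually_lt (hC : C.IsPeriodic R) {h : ℝ} (H : C.NearConstant R h)
    (hc : Even R ∧ c = 4 ∨ Odd R ∧ c = 5) {γ : ℝ}
    (hγ : ¬∃ p q : ℤ, γ = (p : ℝ) + (q : ℝ) * α) :
    ¬∀ᶠ n : ℤ in cofinite,
      (1 - 3 * h + c * h ^ 2 + 10 ^ 22 * h ^ 3) / 4 < (|n| : ℝ) * nint (n * α - γ) := by
  intro hlt
  have hc6 : c ∈ Set.Icc 0 6 := by rcases hc with ⟨-, rfl⟩ | ⟨-, rfl⟩ <;> norm_num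
  obtain ⟨J, hJ⟩ := H.exists_forall_isAdmissible hc6 hγ hlt
  obtain ⟨T, hpar, hT⟩ := hJ (4 * J) (by omega)
  rcases hc with ⟨hR, rfl⟩ | ⟨hR, rfl⟩
  · exact (hC.shift J).not_isAdmissible_of_even hR hpar hT
  · exact (hC.shift J).not_isAdmissible_of_odd hR hpar hT

end LatticeChain

/-! ### Grids without small products -/

lemma abs_mul_add_sub_mul_le {b t s u v h B M : ℝ} (hb : |b| ≤ h) (ht : |t| ≤ B) (hs : |s| ≤ 1)
    (hu : |u| ≤ M) (hv : |v| ≤ M) : |b * (t + (u - s * v))| ≤ h * (B + 2 * M) := by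
  have hsv : |s * v| ≤ 1 * M := by
    rw [abs_mul]
    gcongr
  rw [abs_mul]
  have hh : 0 ≤ h := (abs_nonneg b).trans hb
  gcongr
  linarith [abs_add_le t (u - s * v), abs_sub u (s * v)]

open BoundedContinuousFunction in
lemma exists_bounded_solution {b t s : ℕ → ℝ} {h B : ℝ} (hh : h ≤ 1 / 4) (hb : ∀ j, |b j| ≤ h)
    (ht : ∀ j, |t j| ≤ B) (hs : ∀ j, |s j| ≤ 1) :
    ∃ P : ℕ → ℝ, (∀ j, P (j + 1) = b j * (t j + (P (j + 2) - s j * P j))) ∧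
      ∀ j, |P j| ≤ 2 * (h * B) := by
  have hh0 : 0 ≤ h := (abs_nonneg _).trans (hb 0)
  have hB : 0 ≤ B := (abs_nonneg _).trans (ht 0)
  let Φ (P : ℕ →ᵇ ℝ) : ℕ →ᵇ ℝ := ofNormedAddCommGroupDiscrete
    (fun | 0 => 0 | j + 1 => b j * (t j + (P (j + 2) - s j * P j))) (h * (B + 2 * ‖P‖)) <| by
      rintro (_ | j)
      · rw [norm_zero]
        positivity
      · exact abs_mul_add_sub_mul_le (hb j) (ht j) (hs j) (P.norm_coe_le_norm _)
          (P.norm_coe_le_norm _)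
  have hΦ : ContractingWith (1 / 2) Φ := by
    refine ⟨by norm_num, LipschitzWith.of_dist_le_mul fun P Q => ?_⟩
    refine (dist_le (by positivity)).2 ?_
    rintro (_ | j)
    · have hzero : dist (Φ P 0) (Φ Q 0) = 0 := dist_self (0 : ℝ)
      rw [hzero]
      positivity
    · have hdiff : Φ P (j + 1) - Φ Q (j + 1) =
          b j * (0 + ((P - Q) (j + 2) - s j * (P - Q) j)) := by
        simp only [Φ, coe_ofNormedAddCommGroupDiscrete, BoundedContinuousFunction.sub_apply]
        ring
      have hle := abs_mul_add_sub_mul_le ((hb j).trans hh) abs_zero.le (hs j)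
        ((P - Q).norm_coe_le_norm (j + 2)) ((P - Q).norm_coe_le_norm j)
      rw [Real.dist_eq, hdiff, dist_eq_norm]
      refine hle.trans_eq ?_
      push_cast
      ring
  set P := hΦ.fixedPoint
  have hP : Φ P = P := hΦ.fixedPoint_isFixedPt
  have hnorm : ‖P‖ ≤ h * (B + 2 * ‖P‖) := by
    nth_rw 1 [← hP]
    exact norm_ofNormedAddCommGroup_le _ (by positivity) _
  refine ⟨P, fun j => (DFunLike.congr_fun hP (j + 1)).symm, fun j => ?_⟩
  have hj : |P j| ≤ ‖P‖ := P.norm_coe_le_norm j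
  nlinarith [norm_nonneg P]

namespace LatticeChain

variable {α : ℝ} (C : LatticeChain α)

/-- The point `(x, y)` lies on the grid with offsets `P`, a translate of the lattice
`{(n, n * α - m)}`. -/
def OnGrid (P : ℕ → ℝ) (x y : ℝ) : Prop := ∀ j, ∃ k : ℤ, C.form j x y = (1 + P j) / 2 + k

variable {C} {R : ℤ} {h : ℝ} {P : ℕ → ℝ} {T : ℕ → ℤ} {x y : ℝ}

lemma OnGrid.add (hxy : C.OnGrid P x y) (n m : ℤ) : C.OnGrid P (n + x) (n * α - m + y) := by
  intro j
  obtain ⟨k, hk⟩ := hxy j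
  obtain ⟨l, hl⟩ := C.exists_int_form_eq_add x y j n m
  refine ⟨k + l, ?_⟩
  rw [hl, hk]
  push_cast
  ring

variable (C) in
lemma exists_form_eq (l₀ l₁ : ℝ) : ∃ x y : ℝ, C.form 0 x y = l₀ ∧ C.form 1 x y = l₁ := by
  have hdet := C.det_error_sq 0
  set d := (C.q (0 + 1) : ℝ) * C.error 0 - C.q 0 * C.error (0 + 1) with hd
  refine ⟨-d * (C.q 1 * l₀ - C.q 0 * l₁), -d * (C.error 1 * l₀ - C.error 0 * l₁), ?_, ?_⟩ <;>
    rw [form] <;> simp only [zero_add] at hd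
  · linear_combination l₀ * hdet - d * l₀ * hd
  · linear_combination l₁ * hdet - d * l₁ * hd

lemma IsOffset.exists_onGrid (S : C.IsOffset h T P) (hpar : ∀ j, T j % 2 = C.a j % 2) :
    ∃ x y : ℝ, C.OnGrid P x y := by
  obtain ⟨x, y, h₀, h₁⟩ := C.exists_form_eq ((1 + P 0) / 2) ((1 + P 1) / 2)
  refine ⟨x, y, fun j => ?_⟩
  induction j using Nat.twoStepInduction with
  | zero => exact ⟨0, by simp [h₀]⟩
  | one => exact ⟨0, by simp [h₁]⟩
  | more j ih₀ ih₁ =>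
    obtain ⟨k, hk⟩ := ih₀
    obtain ⟨l, hl⟩ := ih₁
    obtain ⟨s, hs⟩ : ∃ s : ℤ, T j + C.a j + C.ε j = 1 + 2 * s := by
      refine ⟨(T j + C.a j + C.ε j) / 2, ?_⟩
      have := hpar j
      rcases C.ε_eq j with hε | hε <;> omega
    refine ⟨C.a j * l + C.ε j * k + s, ?_⟩
    have hs' : (T j : ℝ) + C.a j + C.ε j = 1 + 2 * s := mod_cast hs
    rw [C.form_add_two, hk, hl]
    push_cast
    linear_combination (1 / 2 : ℝ) * S.a_mul j + (1 / 2 : ℝ) * hs'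

namespace OnGrid

variable (hP : ∀ j, |P j| ≤ 1 / 100) (hxy : C.OnGrid P x y)

include hP hxy

lemma form_eq_or_le (j : ℕ) :
    (∃ σ : ℤˣ, C.form j x y = ((σ : ℤ) + P j) / 2 ∧ |C.form j x y| ∈ Set.Icc (9 / 20) (11 / 20)) ∨
      7 / 5 ≤ |C.form j x y| := by
  obtain ⟨k, hk⟩ := hxy j
  obtain ⟨hl, hu⟩ := abs_le.1 (hP j)
  obtain rfl | rfl | hk₁ | hk₁ : k = 0 ∨ k = -1 ∨ 1 ≤ k ∨ k ≤ -2 := by omega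
  · refine .inl ⟨1, by rw [hk]; norm_num, ?_⟩
    rw [hk, abs_of_pos (by push_cast; linarith)]
    constructor <;> push_cast <;> linarith
  · refine .inl ⟨-1, by rw [hk]; push_cast; ring, ?_⟩
    rw [hk, abs_of_neg (by push_cast; linarith)]
    constructor <;> push_cast <;> linarith
  · have : (1 : ℝ) ≤ k := mod_cast hk₁
    rw [hk, abs_of_pos (by linarith)]
    exact .inr (by linarith)
  · have : (k : ℝ) ≤ -2 := mod_cast hk₁
    rw [hk, abs_of_neg (by linarith)]
    exact .inr (by linarith)

lemma le_abs_form (j : ℕ) : 9 / 20 ≤ |C.form j x y| := by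
  rcases form_eq_or_le hP hxy j with ⟨-, -, hj⟩ | hj
  exacts [hj.1, by linarith]

lemma snd_ne_zero : y ≠ 0 := by
  rintro rfl
  have hlim : Tendsto (fun j => |x| * |C.error j|) atTop (nhds 0) := by
    simpa using C.tendsto_abs_error.const_mul |x|
  obtain ⟨j, hj⟩ := (hlim.eventually_lt_const (by norm_num : (0 : ℝ) < 9 / 20)).exists
  refine hj.not_ge ((le_abs_form hP hxy j).trans_eq ?_)
  rw [form, mul_zero, zero_sub, abs_neg, abs_mul]

end OnGrid

lemma div_four_le_of_vertex {j : ℕ} {μ : ℝ} {σ τ : ℤˣ}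
    (hV : μ * (1 - C.qRatio j * C.errorRatio j) ≤ C.vertexProd P j σ τ)
    (hσ : C.form j x y = ((σ : ℤ) + P j) / 2)
    (hτ : C.form (j + 1) x y = ((τ : ℤ) + P (j + 1)) / 2) : μ / 4 ≤ |x| * |y| := by
  have hprod := C.abs_mul_abs_eq_abs_vertexProd hσ hτ
  have habs := le_abs_self (C.vertexProd P j σ τ)
  have hpos := C.half_le_one_sub_mul j
  refine le_of_mul_le_mul_right ?_ (one_half_pos.trans_le hpos)
  linarith

variable (C) in
lemma exists_level (hy : y ≠ 0) (hxy : |y| * C.q 3 < |x| * |C.error 2|) :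
    ∃ j, |y| * C.q (j + 3) < |x| * |C.error (j + 2)| ∧
      |x| * |C.error (j + 3)| ≤ |y| * C.q (j + 4) := by
  have hex : ∃ i, |x| * |C.error (i + 2)| ≤ |y| * C.q (i + 3) := by
    have hlim : Tendsto (fun i => |x| * |C.error (i + 2)|) atTop (nhds 0) := by
      simpa using ((tendsto_add_atTop_iff_nat 2).2 C.tendsto_abs_error).const_mul |x|
    obtain ⟨i, hi⟩ := (hlim.eventually_lt_const (abs_pos.2 hy)).exists
    have hq : (1 : ℝ) ≤ C.q (i + 3) := mod_cast Int.cast_pos.1 (C.cast_q_succ_pos (i + 2))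
    exact ⟨i, hi.le.trans (le_mul_of_one_le_right (abs_nonneg y) hq)⟩
  obtain ⟨j, hj⟩ := Nat.exists_eq_add_one_of_ne_zero (n := Nat.find hex) fun h => by
    have := Nat.find_spec hex
    rw [h] at this
    exact this.not_gt hxy
  exact ⟨j, not_le.1 (Nat.find_min hex (by omega)), by simpa [hj] using Nat.find_spec hex⟩

namespace NearConstant

variable (H : C.NearConstant R h)

include H

lemma exists_isOffset_of_abs_le (hT : ∀ j, |(T j : ℝ)| ≤ 2) : ∃ P, C.IsOffset h T P := by
  have hb (j : ℕ) : |(C.a j : ℝ)⁻¹| ≤ h := by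
    rw [abs_of_pos (inv_pos.2 (H.a_pos j)), inv_le_iff_one_le_mul₀ (H.a_pos j), ← H.R_mul_h,
      mul_comm]
    exact mul_le_mul_of_nonneg_left (by linarith [(H.excess_mem_Icc j).1]) H.h_pos.le
  obtain ⟨P, hrec, hP⟩ := exists_bounded_solution (H.h_le_one_div_hundred.trans (by norm_num)) hb
    hT (fun j => (C.abs_ε j).le)
  refine ⟨P, fun j => ?_, fun j => (hP j).trans ?_, fun j => (hT j).trans (by norm_num)⟩
  · rw [hrec, mul_inv_cancel_left₀ (H.a_pos j).ne', add_sub_assoc]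
  · linarith [H.h_pos]

lemma qRatio_succ_le_one_div (j : ℕ) : C.qRatio (j + 1) ≤ 1 / 50 := by
  linarith [H.qRatio_succ_le j, H.h_le_one_div_hundred]

lemma abs_errorRatio_le_one_div (j : ℕ) : |C.errorRatio j| ≤ 1 / 50 := by
  linarith [H.abs_errorRatio_le j, H.h_le_one_div_hundred]

lemma q_add_two_mul_abs_error_le (j : ℕ) :
    C.q (j + 2) * |C.error (j + 1)| ≤ 101 / 100 := by
  have hmul : C.qRatio (j + 1) * C.errorRatio (j + 1) ≤ 1 / 50 * (1 / 50) := by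
    refine (le_abs_self _).trans ?_
    rw [abs_mul, abs_of_nonneg (C.qRatio_nonneg _)]
    gcongr
    exacts [H.qRatio_succ_le_one_div j, H.abs_errorRatio_le_one_div _]
  have hpos : 0 < C.q (j + 2) * |C.error (j + 1)| :=
    mul_pos (C.cast_q_succ_pos _) (C.abs_error_pos _)
  nlinarith [C.q_succ_mul_abs_error (j + 1)]

lemma q_succ_mul_abs_error_succ_le (j : ℕ) :
    C.q (j + 1) * |C.error (j + 1)| ≤ 1 / 20 :=
  calc C.q (j + 1) * |C.error (j + 1)|
      = C.qRatio (j + 1) * (C.q (j + 2) * |C.error (j + 1)|) := by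
        rw [← mul_assoc, C.qRatio_mul]
    _ ≤ 1 / 50 * (101 / 100) := by
        gcongr
        exacts [mul_nonneg (C.cast_q_nonneg _) (abs_nonneg _), H.qRatio_succ_le_one_div j,
          H.q_add_two_mul_abs_error_le j]
    _ ≤ 1 / 20 := by norm_num

lemma le_abs_fst {j : ℕ} (h₁ : 7 / 5 ≤ |C.form (j + 1) x y|)
    (h₂ : |C.form (j + 2) x y| ≤ 11 / 20) : 13 / 10 * C.q (j + 2) ≤ |x| := by
  have hmul : |C.qRatio (j + 1) * C.form (j + 2) x y| ≤ 1 / 50 * (11 / 20) := by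
    rw [abs_mul, abs_of_nonneg (C.qRatio_nonneg _)]
    gcongr
    exact H.qRatio_succ_le_one_div j
  rw [C.abs_fst_eq (j + 1) x y, mul_comm]
  gcongr
  · exact C.cast_q_nonneg _
  · linarith [abs_sub_abs_le_abs_sub (C.form (j + 1) x y) (C.qRatio (j + 1) * C.form (j + 2) x y)]

lemma le_abs_snd {j : ℕ} (h₁ : |C.form j x y| ≤ 11 / 20)
    (h₂ : 7 / 5 ≤ |C.form (j + 1) x y|) : 13 / 10 * |C.error j| ≤ |y| := by
  have hmul : |C.errorRatio j * C.form j x y| ≤ 1 / 50 * (11 / 20) := by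
    rw [abs_mul]
    gcongr
    exact H.abs_errorRatio_le_one_div j
  rw [C.abs_snd_eq j x y, mul_comm]
  gcongr
  linarith [abs_sub_abs_le_abs_sub (C.form (j + 1) x y) (C.errorRatio j * C.form j x y)]

lemma abs_form_le {j : ℕ} (hlt : |x| * |y| < 1 / 4)
    (h₁ : |y| * C.q (j + 2) ≤ |x| * |C.error (j + 1)|)
    (h₂ : |x| * |C.error (j + 2)| ≤ |y| * C.q (j + 3)) : |C.form (j + 2) x y| ≤ 6 / 5 := by
  have hprod (i : ℕ) : |y| * C.q (i + 2) * (|x| * |C.error (i + 1)|) ≤ 1 / 4 * (101 / 100) :=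
    calc |y| * C.q (i + 2) * (|x| * |C.error (i + 1)|)
        = |x| * |y| * (C.q (i + 2) * |C.error (i + 1)|) := by ring
      _ ≤ 1 / 4 * (101 / 100) := by
        gcongr
        exacts [mul_nonneg (C.cast_q_nonneg _) (abs_nonneg _), H.q_add_two_mul_abs_error_le i]
  have hA : |y| * C.q (j + 2) ≤ 3 / 5 := by
    have : 0 ≤ |y| * C.q (j + 2) := mul_nonneg (abs_nonneg y) (C.cast_q_nonneg _)
    nlinarith [hprod j]
  have hB : |x| * |C.error (j + 2)| ≤ 3 / 5 := by
    have : 0 ≤ |x| * |C.error (j + 2)| := by positivity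
    nlinarith [hprod (j + 1)]
  calc |C.form (j + 2) x y| ≤ |C.q (j + 2) * y| + |x * C.error (j + 2)| := abs_sub _ _
    _ = |y| * C.q (j + 2) + |x| * |C.error (j + 2)| := by
      rw [abs_mul, abs_mul, abs_of_nonneg (C.cast_q_nonneg _), mul_comm |y|]
    _ ≤ 6 / 5 := by linarith

lemma one_div_four_le_of_isolated {j : ℕ} (h₁ : 7 / 5 ≤ |C.form (j + 1) x y|)
    (h₂ : |C.form (j + 2) x y| ∈ Set.Icc (9 / 20) (11 / 20))
    (h₃ : 7 / 5 ≤ |C.form (j + 3) x y|) : 1 / 4 ≤ |x| * |y| := by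
  have hx := H.le_abs_fst h₁ h₂.2
  have hy : 13 / 10 * |C.error (j + 2)| ≤ |y| := H.le_abs_snd h₂.2 h₃
  have hsum : 9 / 20 ≤ C.q (j + 2) * |y| + |x| * |C.error (j + 2)| :=
    calc 9 / 20 ≤ |C.form (j + 2) x y| := h₂.1
      _ ≤ |C.q (j + 2) * y| + |x * C.error (j + 2)| := abs_sub _ _
      _ = _ := by rw [abs_mul, abs_mul, abs_of_nonneg (C.cast_q_nonneg _)]
  have hqe : C.q (j + 2) * |C.error (j + 2)| ≤ 1 / 20 := H.q_succ_mul_abs_error_succ_le (j + 1)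
  nlinarith [mul_nonneg (sub_nonneg.2 hx) (sub_nonneg.2 hy)]

lemma div_four_le_abs_mul_abs {μ : ℝ} (hP : ∀ j, |P j| ≤ 1 / 100) (hxy : C.OnGrid P x y)
    (hμ : μ ≤ 1)
    (hV : ∀ j σ τ, μ * (1 - C.qRatio (j + 2) * C.errorRatio (j + 2)) ≤
      C.vertexProd P (j + 2) σ τ)
    (hx : |y| * C.q 3 < |x| * |C.error 2|) : μ / 4 ≤ |x| * |y| := by
  -- At the level where its two terms are balanced the form takes a value close to `± 1 / 2`.
  -- Unless a neighbouring form does the same, which makes `(x, y)` a vertex, the product is at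
  -- least `1 / 4`.
  by_contra! hlt
  obtain ⟨j, hj₁, hj₂⟩ := C.exists_level (OnGrid.snd_ne_zero hP hxy) hx
  have hform : |C.form (j + 3) x y| ≤ 6 / 5 := H.abs_form_le (by linarith) hj₁.le hj₂
  obtain ⟨σ, hσ, hσ'⟩ | h₃ := hxy.form_eq_or_le hP (j + 3)
  · obtain ⟨τ, hτ, -⟩ | h₂ := hxy.form_eq_or_le hP (j + 2)
    · exact hlt.not_ge (div_four_le_of_vertex (hV j τ σ) hτ hσ)
    obtain ⟨τ, hτ, -⟩ | h₄ := hxy.form_eq_or_le hP (j + 4)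
    · exact hlt.not_ge (div_four_le_of_vertex (hV (j + 1) σ τ) hσ hτ)
    linarith [H.one_div_four_le_of_isolated h₂ hσ' h₄]
  · linarith

end NearConstant

end LatticeChain

/-! ### Extremal translates -/

lemma eventually_lt_abs_intCast (b : ℝ) : ∀ᶠ n : ℤ in cofinite, b < |(n : ℝ)| :=
  (tendsto_norm_cocompact_atTop.comp Int.tendsto_coe_cofinite).eventually_gt_atTop b

lemma eventually_sub_le_abs_mul_nint {α x₀ y₀ c δ N : ℝ} (hδ : 0 < δ) (hc : c ≤ 1)
    (hgrid : ∀ n m : ℤ, N < |n + x₀| → |n * α - m + y₀| ≤ 1 / 2 →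
      c ≤ |n + x₀| * |n * α - m + y₀|) :
    ∀ᶠ n : ℤ in cofinite, c - δ ≤ (|n| : ℝ) * nint (n * α - -y₀) := by
  filter_upwards [eventually_lt_abs_intCast (N + |x₀|), eventually_lt_abs_intCast (|x₀| / δ)]
    with n hN hx
  set Y := nint (n * α - -y₀) with hY
  have hround : |n * α - round (n * α - -y₀) + y₀| = Y := by
    rw [hY, nint]
    congr 1
    ring
  have hfst : |(n : ℝ)| - |x₀| ≤ |n + x₀| := by
    simpa using abs_sub_abs_le_abs_sub (n : ℝ) (-x₀)
  have hle := hgrid n (round (n * α - -y₀)) (by linarith) (hround.trans_le (abs_sub_round _))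
  rw [hround] at hle
  rw [div_lt_iff₀ hδ] at hx
  have hY0 : 0 ≤ Y := abs_nonneg _
  have hmul : c ≤ (1 + δ) * (|(n : ℝ)| * Y) :=
    calc c ≤ |n + x₀| * Y := hle
      _ ≤ (|(n : ℝ)| + |(n : ℝ)| * δ) * Y := by
        gcongr
        exact (abs_add_le _ _).trans (by linarith)
      _ = (1 + δ) * (|(n : ℝ)| * Y) := by ring
  by_contra! hlt
  nlinarith

namespace LatticeChain

variable {α : ℝ} {C : LatticeChain α} {R c : ℤ} {h : ℝ} {T : ℕ → ℤ}

lemma NearConstant.exists_eventually_le (H : C.NearConstant R h) (hc : |(c : ℝ)| ≤ 6)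
    (hT : C.IsAdmissible R c T) (hT2 : ∀ j, |(T j : ℝ)| ≤ 2) (hpar : ∀ j, T j % 2 = C.a j % 2) :
    ∃ γ : ℝ, (¬∃ p q : ℤ, γ = (p : ℝ) + (q : ℝ) * α) ∧ ∀ᶠ n : ℤ in cofinite,
      (1 - 3 * h + c * h ^ 2 - 10 ^ 22 * h ^ 3) / 4 - h ^ 3 ≤ (|n| : ℝ) * nint (n * α - γ) := by
  have hh := H.h_pos
  have hh1 := H.h_le_one_div_hundred
  have hh2 := H.h_le
  obtain ⟨P, S⟩ := H.exists_isOffset_of_abs_le hT2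
  obtain ⟨x₀, y₀, hgrid⟩ := S.exists_onGrid hpar
  have hP (j : ℕ) : |P j| ≤ 1 / 100 := (S.abs_le j).trans (by linarith)
  have hμ : 1 - 3 * h + c * h ^ 2 - 10 ^ 22 * h ^ 3 ≤ 1 := by
    nlinarith [(abs_le.1 hc).2, pow_pos hh 2, pow_pos hh 3]
  refine ⟨-y₀, ?_, eventually_sub_le_abs_mul_nint (x₀ := x₀) (N := C.q 3 / |C.error 2|)
    (pow_pos hh 3) (by linarith) fun n m hn hm => ?_⟩
  · rintro ⟨u, v, huv⟩
    refine OnGrid.snd_ne_zero hP (hgrid.add v (-u)) ?_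
    push_cast
    linarith
  · refine H.div_four_le_abs_mul_abs hP (hgrid.add n m) hμ
      (fun j σ τ => H.le_vertexProd_of_toLex_le S hc (hT j σ τ)) ?_
    rw [div_lt_iff₀ (C.abs_error_pos 2)] at hn
    nlinarith [C.cast_q_succ_pos 2]

namespace IsPeriodic

variable (hC : C.IsPeriodic R)

include hC

lemma isAdmissible_of_even_coeffs :
    C.IsAdmissible R 4 fun j => if j % 4 < 2 then 0 else 1 := by
  intro j σ τ
  obtain ⟨k, r, hr, rfl⟩ : ∃ k r, r < 4 ∧ j = 4 * k + r := ⟨j / 4, j % 4, by omega, by omega⟩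
  have mod_four (i : ℕ) : (4 * k + r + i) % 4 = (r + i) % 4 := by omega
  have mod_two (i : ℕ) : (4 * k + r + i) % 2 = (r + i) % 2 := by omega
  rw [Prod.Lex.toLex_le_toLex]
  simp only [vertexCoeff₁, vertexCoeff₂, hC.a_eq, hC.ε_eq, mod_four, mod_two, Nat.mul_add_mod]
  rcases Int.units_eq_one_or σ with rfl | rfl <;>
    rcases Int.units_eq_one_or τ with rfl | rfl <;>
      interval_cases r <;> norm_num

lemma isAdmissible_of_odd_coeffs :
    C.IsAdmissible R 5 fun j => if j % 4 < 2 then 1 else if j % 4 = 2 then 0 else -2 := by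
  intro j σ τ
  obtain ⟨k, r, hr, rfl⟩ : ∃ k r, r < 4 ∧ j = 4 * k + r := ⟨j / 4, j % 4, by omega, by omega⟩
  have mod_four (i : ℕ) : (4 * k + r + i) % 4 = (r + i) % 4 := by omega
  have mod_two (i : ℕ) : (4 * k + r + i) % 2 = (r + i) % 2 := by omega
  rw [Prod.Lex.toLex_le_toLex]
  simp only [vertexCoeff₁, vertexCoeff₂, hC.a_eq, hC.ε_eq, mod_four, mod_two, Nat.mul_add_mod]
  rcases Int.units_eq_one_or σ with rfl | rfl <;>
    rcases Int.units_eq_one_or τ with rfl | rfl <;>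
      interval_cases r <;> norm_num

lemma exists_isAdmissible (hc : Even R ∧ c = 4 ∨ Odd R ∧ c = 5) :
    ∃ T : ℕ → ℤ, C.IsAdmissible R c T ∧ (∀ j, |(T j : ℝ)| ≤ 2) ∧ ∀ j, T j % 2 = C.a j % 2 := by
  rcases hc with ⟨hR, rfl⟩ | ⟨hR, rfl⟩
  · refine ⟨_, hC.isAdmissible_of_even_coeffs, fun j => ?_, fun j => ?_⟩
    · split_ifs <;> norm_num
    · rw [hC.a_eq]
      grind
  · refine ⟨_, hC.isAdmissible_of_odd_coeffs, fun j => ?_, fun j => ?_⟩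
    · split_ifs <;> norm_num
    · rw [hC.a_eq]
      grind

lemma exists_eventually_le (H : C.NearConstant R h) (hc : Even R ∧ c = 4 ∨ Odd R ∧ c = 5) :
    ∃ γ : ℝ, (¬∃ p q : ℤ, γ = (p : ℝ) + (q : ℝ) * α) ∧ ∀ᶠ n : ℤ in cofinite,
      (1 - 3 * h + c * h ^ 2 - 10 ^ 22 * h ^ 3) / 4 - h ^ 3 ≤ (|n| : ℝ) * nint (n * α - γ) := by
  obtain ⟨T, hT, hT2, hpar⟩ := hC.exists_isAdmissible hc
  refine H.exists_eventually_le ?_ hT hT2 hpar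
  rcases hc with ⟨-, rfl⟩ | ⟨-, rfl⟩ <;> norm_num

end IsPeriodic

end LatticeChain

/-! ### The nearest integer continued fraction -/

section NICF

variable {α : ℝ}

lemma inv_nicfT (α : ℝ) (i : ℕ) :
    (nicfT α i)⁻¹ = nicfA α (i + 1) + nicfE α (i + 2) * nicfT α (i + 1) := by
  simp only [nicfA, nicfE, nicfT]
  split_ifs with h
  · rw [Int.cast_one, one_mul, Int.floor_add_fract]
  · have h0 : Int.fract (nicfT α i)⁻¹ ≠ 0 := fun h0 => h (by norm_num [h0])
    push_cast
    linarith [Int.ceil_eq_add_one_sub_fract h0]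

lemma nicfE_eq_one_or (α : ℝ) (i : ℕ) : nicfE α i = 1 ∨ nicfE α i = -1 := by
  match i with
  | 0 => exact Or.inl rfl
  | 1 => exact Or.inl rfl
  | i + 2 => exact ite_eq_or_eq _ _ _

/-- The sequence with initial values `x`, `y` that satisfies the recursion of the continuants of the
nearest integer continued fraction of `α`. The convergents `0 / 1, 1 / a₁, …` of `α`, preceded by
the formal convergent `1 / 0`, have numerators `nicfContinuant α 1 0` and denominators
`nicfContinuant α 0 1`. -/
noncomputable def nicfContinuant (α : ℝ) (x y : ℤ) : ℕ → ℤ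
  | 0 => x
  | 1 => y
  | j + 2 => nicfA α (j + 1) * nicfContinuant α x y (j + 1)
      + nicfE α (j + 1) * nicfContinuant α x y j

lemma nicfContinuant_det_sq (α : ℝ) (j : ℕ) :
    (nicfContinuant α 0 1 (j + 1) * nicfContinuant α 1 0 j
      - nicfContinuant α 0 1 j * nicfContinuant α 1 0 (j + 1)) ^ 2 = 1 := by
  induction j with
  | zero => simp [nicfContinuant]
  | succ j ih =>
    have hE : nicfE α (j + 1) ^ 2 = 1 := sq_eq_one_iff.2 (nicfE_eq_one_or α (j + 1))
    simp only [nicfContinuant] at ih ⊢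
    linear_combination nicfE α (j + 1) ^ 2 * ih + hE

section

variable (hα : Irrational α) (h_pos : 0 < α) (h_lt : α < 1 / 2)

include hα h_pos h_lt

lemma nicfT_spec (i : ℕ) : Irrational (nicfT α i) ∧ 0 < nicfT α i ∧ nicfT α i < 1 / 2 := by
  induction i with
  | zero => exact ⟨hα, h_pos, h_lt⟩
  | succ i ih =>
    have hfract : Irrational (Int.fract (nicfT α i)⁻¹) := ih.1.inv.sub_intCast _
    have hne : Int.fract (nicfT α i)⁻¹ ≠ 1 / 2 := by simpa using hfract.ne_rat (1 / 2)
    simp only [nicfT]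
    split_ifs with h
    · exact ⟨hfract, (Int.fract_nonneg _).lt_of_ne' hfract.ne_zero, h.lt_of_ne hne⟩
    · refine ⟨by simpa using hfract.intCast_sub 1, ?_, by linarith⟩
      linarith [Int.fract_lt_one (nicfT α i)⁻¹]

lemma two_le_nicfA_succ (i : ℕ) : 2 ≤ nicfA α (i + 1) := by
  obtain ⟨-, hT_pos, hT_lt⟩ := nicfT_spec hα h_pos h_lt i
  have hfloor : 2 ≤ ⌊(nicfT α i)⁻¹⌋ := by
    rw [Int.le_floor, le_inv_comm₀ (by norm_num) hT_pos]
    norm_num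
    linarith
  simp only [nicfA]
  split_ifs
  · exact hfloor
  · exact hfloor.trans (Int.floor_le_ceil _)

lemma nicfContinuant_nonneg_and_lt (j : ℕ) :
    0 ≤ nicfContinuant α 0 1 j ∧ nicfContinuant α 0 1 j < nicfContinuant α 0 1 (j + 1) := by
  induction j with
  | zero => simp [nicfContinuant]
  | succ j ih =>
    refine ⟨ih.1.trans ih.2.le, ?_⟩
    have hA := two_le_nicfA_succ hα h_pos h_lt j
    rw [nicfContinuant]
    rcases nicfE_eq_one_or α (j + 1) with hE | hE <;> rw [hE] <;> nlinarith

lemma nicfContinuant_succ_mul_sub (j : ℕ) :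
    (nicfContinuant α 0 1 (j + 1) : ℝ) * α - nicfContinuant α 1 0 (j + 1) =
      -nicfE α (j + 1) * nicfT α j *
        ((nicfContinuant α 0 1 j : ℝ) * α - nicfContinuant α 1 0 j) := by
  induction j with
  | zero => simp [nicfContinuant, nicfE, nicfT]
  | succ j ih =>
    have hT : nicfT α j * (nicfA α (j + 1) + nicfE α (j + 2) * nicfT α (j + 1)) = 1 := by
      rw [← inv_nicfT, mul_inv_cancel₀ (nicfT_spec hα h_pos h_lt j).2.1.ne']
    simp only [nicfContinuant]
    push_cast
    linear_combination (nicfA α (j + 1) + nicfE α (j + 2) * nicfT α (j + 1)) * ih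
      - nicfE α (j + 1) * ((nicfContinuant α 0 1 j : ℝ) * α - nicfContinuant α 1 0 j) * hT

end

/-- The chain of the convergents of the nearest integer continued fraction of `α`. -/
noncomputable def nicfChain (hα : Irrational α) (h_pos : 0 < α) (h_lt : α < 1 / 2) :
    LatticeChain α where
  a j := nicfA α (j + 1)
  ε j := nicfE α (j + 1)
  q := nicfContinuant α 0 1
  p := nicfContinuant α 1 0
  ε_eq j := nicfE_eq_one_or α (j + 1)
  q_add_two _ := rfl
  p_add_two _ := rfl
  det_sq := nicfContinuant_det_sq α
  q_zero_nonneg := le_rfl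
  q_lt j := (nicfContinuant_nonneg_and_lt hα h_pos h_lt j).2
  sub_ne_zero j := by
    induction j with
    | zero => simp [nicfContinuant]
    | succ j ih =>
      have hE : nicfE α (j + 1) ≠ 0 := by
        rcases nicfE_eq_one_or α (j + 1) with hE | hE <;> rw [hE] <;> norm_num
      rw [nicfContinuant_succ_mul_sub hα h_pos h_lt]
      exact mul_ne_zero (mul_ne_zero (neg_ne_zero.2 (mod_cast hE))
        (nicfT_spec hα h_pos h_lt j).2.1.ne') ih
  abs_sub_le j := by
    obtain ⟨-, hT_pos, hT_lt⟩ := nicfT_spec hα h_pos h_lt j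
    have hE : |(nicfE α (j + 1) : ℝ)| = 1 := by
      rcases nicfE_eq_one_or α (j + 1) with hE | hE <;> simp [hE]
    rw [nicfContinuant_succ_mul_sub hα h_pos h_lt, abs_mul, abs_mul, abs_neg, hE, one_mul,
      abs_of_pos hT_pos]
    linarith [mul_le_mul_of_nonneg_right hT_lt.le
      (abs_nonneg ((nicfContinuant α 0 1 j : ℝ) * α - nicfContinuant α 1 0 j))]

lemma eq_and_eq_of_mul_eq_mul {e a s b : ℤ} (he : e = 1 ∨ e = -1) (hs : s = 1 ∨ s = -1)
    (ha : 0 < a) (hb : 0 < b) (h : e * a = s * b) : e = s ∧ a = b := by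
  rcases he with rfl | rfl <;> rcases hs with rfl | rfl <;> omega

lemma exists_isPeriodic (hα : Irrational α) (h_pos : 0 < α) (h_lt : α < 1 / 2) {R : ℤ}
    (hR : 0 < R) {i₀ : ℕ} (hi₀ : 1 ≤ i₀)
    (h : ∀ k : ℕ, nicfE α (i₀ + 4 * k) * nicfA α (i₀ + 4 * k) = -R ∧
      nicfE α (i₀ + 4 * k + 1) * nicfA α (i₀ + 4 * k + 1) = R ∧
      nicfE α (i₀ + 4 * k + 2) * nicfA α (i₀ + 4 * k + 2) = -(R + 1) ∧
      nicfE α (i₀ + 4 * k + 3) * nicfA α (i₀ + 4 * k + 3) = R + 1) :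
    ∃ C : LatticeChain α, C.IsPeriodic R := by
  obtain ⟨i, rfl⟩ := Nat.exists_eq_add_of_le' hi₀
  have key (j : ℕ) : nicfE α (i + j + 1) = (if j % 2 = 0 then -1 else 1) ∧
      nicfA α (i + j + 1) = if j % 4 < 2 then R else R + 1 := by
    refine eq_and_eq_of_mul_eq_mul (nicfE_eq_one_or α _) (by split_ifs <;> simp)
      (two_pos.trans_le (two_le_nicfA_succ hα h_pos h_lt _)) (by split_ifs <;> omega) ?_
    obtain ⟨k, r, hr, rfl⟩ : ∃ k r, r < 4 ∧ j = 4 * k + r := ⟨j / 4, j % 4, by omega, by omega⟩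
    have mod_two : (4 * k + r) % 2 = r % 2 := by omega
    rw [show i + (4 * k + r) + 1 = i + 1 + 4 * k + r by ring, mod_two, Nat.mul_add_mod]
    obtain ⟨h0, h1, h2, h3⟩ := h k
    interval_cases r <;> norm_num <;> linarith
  exact ⟨(nicfChain hα h_pos h_lt).shift i, fun j => (key j).2, fun j => (key j).1⟩

end NICF

/-! ### The inhomogeneous approximation constant -/

lemma abs_mul_nint_nonneg (α γ : ℝ) (n : ℤ) : 0 ≤ (|n| : ℝ) * nint (n * α - γ) :=
  mul_nonneg (abs_nonneg _) (abs_nonneg _)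

lemma Mval_le {α γ m : ℝ}
    (h : ¬∀ᶠ n : ℤ in cofinite, m < (|n| : ℝ) * nint (n * α - γ)) : Mval α γ ≤ m := by
  contrapose! h
  exact eventually_lt_of_lt_liminf h (isBoundedUnder_of ⟨0, abs_mul_nint_nonneg α γ⟩)

namespace LatticeChain

variable {α : ℝ} (C : LatticeChain α)

include C

lemma le_Mval {γ m : ℝ} (hγ : ¬∃ p q : ℤ, γ = (p : ℝ) + (q : ℝ) * α)
    (h : ∀ᶠ n : ℤ in cofinite, m ≤ (|n| : ℝ) * nint (n * α - γ)) : m ≤ Mval α γ := by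
  refine le_liminf_of_le (IsCoboundedUnder.of_frequently_le (a := 2) ?_) h
  simpa only [not_eventually, not_lt] using C.not_eventually_two_lt hγ

lemma rho_mem_Icc_zero_two : rho α ∈ Set.Icc 0 2 := by
  refine ⟨Real.sSup_nonneg ?_, Real.sSup_le ?_ zero_le_two⟩ <;> rintro _ ⟨γ, hγ, rfl⟩
  · exact C.le_Mval hγ (Eventually.of_forall (abs_mul_nint_nonneg α γ))
  · exact Mval_le (C.not_eventually_two_lt hγ)

lemma rho_mem_Icc {l u : ℝ}
    (hl : ∃ γ : ℝ, (¬∃ p q : ℤ, γ = (p : ℝ) + (q : ℝ) * α) ∧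
      ∀ᶠ n : ℤ in cofinite, l ≤ (|n| : ℝ) * nint (n * α - γ))
    (hu : ∀ γ : ℝ, (¬∃ p q : ℤ, γ = (p : ℝ) + (q : ℝ) * α) →
      ¬∀ᶠ n : ℤ in cofinite, u < (|n| : ℝ) * nint (n * α - γ)) :
    rho α ∈ Set.Icc l u := by
  obtain ⟨γ, hγ, hle⟩ := hl
  have hub : u ∈ upperBounds
      {m : ℝ | ∃ γ : ℝ, (¬∃ p q : ℤ, γ = (p : ℝ) + (q : ℝ) * α) ∧ m = Mval α γ} := by
    rintro _ ⟨γ, hγ, rfl⟩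
    exact Mval_le (hu γ hγ)
  exact ⟨(C.le_Mval hγ hle).trans (le_csSup ⟨u, hub⟩ ⟨γ, hγ, rfl⟩), csSup_le ⟨_, γ, hγ, rfl⟩ hub⟩

end LatticeChain

namespace LatticeChain.IsPeriodic

variable {α : ℝ} {C : LatticeChain α} {R c : ℤ} {h : ℝ}

lemma abs_rho_sub_le_of_small (hC : C.IsPeriodic R) (hc : Even R ∧ c = 4 ∨ Odd R ∧ c = 5)
    (h_pos : 0 < h) (h_le : h ≤ 1 / 10 ^ 30) (hRh : R * h = 1) :
    |rho α - 1 / 4 * (1 - 3 * h + c * h ^ 2)| ≤ 10 ^ 100 * h ^ 3 := by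
  have H := hC.nearConstant h_pos h_le hRh
  obtain ⟨hl, hu⟩ := C.rho_mem_Icc (hC.exists_eventually_le H hc)
    fun γ hγ => hC.not_eventually_lt H hc hγ
  have : 0 < h ^ 3 := by positivity
  rw [abs_le]
  constructor <;> linarith

lemma abs_rho_sub_le (hC : C.IsPeriodic R) (hc : Even R ∧ c = 4 ∨ Odd R ∧ c = 5) (hR : 0 < R) :
    |rho α - 1 / 4 * (1 - 3 / (R : ℝ) + c / (R : ℝ) ^ 2)| ≤ 10 ^ 100 / (R : ℝ) ^ 3 := by
  have hR' : (1 : ℝ) ≤ R := mod_cast hR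
  obtain ⟨h, R_eq⟩ : ∃ h : ℝ, R = h⁻¹ := ⟨(R : ℝ)⁻¹, (inv_inv _).symm⟩
  have h_pos : 0 < h := inv_pos.1 (R_eq ▸ one_pos.trans_le hR')
  simp only [R_eq, inv_pow, div_inv_eq_mul]
  rcases le_or_gt h (1 / 10 ^ 30) with h_le | h_gt
  · refine hC.abs_rho_sub_le_of_small hc h_pos h_le ?_
    rw [R_eq, inv_mul_cancel₀ h_pos.ne']
  · obtain ⟨hρ0, hρ2⟩ := C.rho_mem_Icc_zero_two
    have h_le_one : h ≤ 1 := (one_le_inv₀ h_pos).1 (R_eq ▸ hR')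
    have h_sq_le : h ^ 2 ≤ 1 := pow_le_one₀ h_pos.le h_le_one
    have large : (10 : ℝ) ≤ 10 ^ 100 * h ^ 3 :=
      calc (10 : ℝ) ≤ 10 ^ 100 * (1 / 10 ^ 30) ^ 3 := by norm_num
        _ ≤ 10 ^ 100 * h ^ 3 := by gcongr
    have hc_sq : 0 ≤ c * h ^ 2 ∧ c * h ^ 2 ≤ 5 := by
      rcases hc with ⟨-, rfl⟩ | ⟨-, rfl⟩ <;> constructor <;> push_cast <;> nlinarith
    rw [abs_le]
    constructor <;> linarith

end LatticeChain.IsPeriodic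

/-- Theorem 2: the asymptotic value of `ρ(α)` for `α` with NICF expansion of eventual
period `-R, R, -(R+1), R+1`. -/
theorem stmt2 :
    ∃ C : ℝ, 0 < C ∧ ∀ R : ℕ, 4 ≤ R → ∀ α : ℝ, Irrational α → 0 < α → α < 1 / 2 →
      (∃ i0 : ℕ, 1 ≤ i0 ∧ ∀ k : ℕ,
        nicfE α (i0 + 4 * k) * nicfA α (i0 + 4 * k) = -(R : ℤ) ∧
        nicfE α (i0 + 4 * k + 1) * nicfA α (i0 + 4 * k + 1) = (R : ℤ) ∧
        nicfE α (i0 + 4 * k + 2) * nicfA α (i0 + 4 * k + 2) = -((R : ℤ) + 1) ∧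
        nicfE α (i0 + 4 * k + 3) * nicfA α (i0 + 4 * k + 3) = (R : ℤ) + 1) →
      (Even R →
        |rho α - 1 / 4 * (1 - 3 / (R : ℝ) + 4 / (R : ℝ) ^ 2)| ≤ C / (R : ℝ) ^ 3) ∧
      (Odd R →
        |rho α - 1 / 4 * (1 - 3 / (R : ℝ) + 5 / (R : ℝ) ^ 2)| ≤ C / (R : ℝ) ^ 3) := by
  refine ⟨10 ^ 100, by positivity, fun R hR α hα h_pos h_lt ⟨i₀, hi₀, hper⟩ => ?_⟩
  have R_pos : (0 : ℤ) < R := by omega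
  obtain ⟨C, hC⟩ := exists_isPeriodic hα h_pos h_lt R_pos hi₀ hper
  constructor <;> intro hpar
  · simpa using hC.abs_rho_sub_le (.inl ⟨(Int.even_coe_nat R).2 hpar, rfl⟩) R_pos
  · simpa using hC.abs_rho_sub_le (.inr ⟨(Int.odd_coe_nat R).2 hpar, rfl⟩) R_pos
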